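/- Let 0 < θ < 1, let 1 ≤ q₀, q₁ < ∞ be constants, let p₀ be a globally log-Hölder continuous exponent with 1 ≤ p₀⁻ ≤ p₀⁺ < ∞, and let α₀, α₁ : ℝ^n → ℝ be locally log-Hölder continuous. Define 1/p(·) := (1−θ)/p₀(·), 1/q := (1−θ)/q₀ + θ/q₁, and α(·) := (1−θ)α₀(·) + θα₁(·). Then there exists a constant c > 0 such that whenever complex sequences λ, λ⁰, λ¹ indexed by ℕ₀ × ℤ^n satisfy |λ_{j,m}| ≤ |λ⁰_{j,m}|^{1−θ} |λ¹_{j,m}|^{θ} for all j ∈ ℕ₀ and m ∈ ℤ^n, one has ‖λ‖_{f^{α(·)}_{p(·),q}} ≤ c ‖λ⁰‖_{f^{α₀(·)}_{p₀(·),q₀}}^{1−θ} ‖λ¹‖_{f^{α₁(·)}_{∞,q₁}}^{θ}. -/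

import Mathlib

open MeasureTheory ENNReal Real Set

noncomputable section

/-- Euclidean space ℝ^n. -/
abbrev En (n : ℕ) := EuclideanSpace ℝ (Fin n)

/-- `g` is locally log-Hölder continuous with constant `c`. -/
def LocLogHolder {n : ℕ} (c : ℝ) (g : En n → ℝ) : Prop :=
  0 < c ∧ ∀ x y : En n, |g x - g y| ≤ c / Real.log (Real.exp 1 + 1 / ‖x - y‖)

/-- `g` is globally log-Hölder continuous with local constant `c`. -/
def GlobLogHolder {n : ℕ} (c : ℝ) (g : En n → ℝ) : Prop :=
  LocLogHolder c g ∧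
    ∃ (gi cd : ℝ), 0 < cd ∧ ∀ x : En n, |g x - gi| ≤ cd / Real.log (Real.exp 1 + ‖x‖)

/-- The kernel η_{v,h}(x) = 2^{nv} (1 + 2^v |x|)^{-h}. -/
def eta (n : ℕ) (v : ℕ) (h : ℝ) (x : En n) : ℝ :=
  (2 : ℝ) ^ (n * v) * (1 + (2 : ℝ) ^ v * ‖x‖) ^ (-h)

/-- The dyadic cube Q_{v,m}. -/
def dyadicCube (n : ℕ) (v : ℤ) (m : Fin n → ℤ) : Set (En n) :=
  {x | ∀ i, (m i : ℝ) ≤ (2 : ℝ) ^ v * x i ∧ (2 : ℝ) ^ v * x i < m i + 1}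

/-- Luxemburg (quasi-)norm of an ℝ≥0∞-valued function with variable exponent `p`. -/
def luxNorm {n : ℕ} (p : En n → ℝ) (F : En n → ℝ≥0∞) : ℝ≥0∞ :=
  sInf {c : ℝ≥0∞ | 0 < c ∧ ∫⁻ x, (F x / c) ^ p x ≤ 1}

/-- The mixed Lebesgue-sequence space norm ‖(F_v)_v‖_{L^{p(·)}(ℓ_{q(·)})}. -/
def mixedNorm {n : ℕ} (p q : En n → ℝ) (F : ℕ → En n → ℝ≥0∞) : ℝ≥0∞ :=
  luxNorm p fun x => (∑' v : ℕ, F v x ^ q x) ^ (1 / q x)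

/-- The sequence space norm ‖λ‖_{f^{α(·)}_{p(·),q(·)}}. -/
def seqNorm {n : ℕ} (α p q : En n → ℝ) (lam : ℕ → (Fin n → ℤ) → ℂ) : ℝ≥0∞ :=
  mixedNorm p q fun v x =>
    ∑' m : Fin n → ℤ,
      ENNReal.ofReal ((2 : ℝ) ^ ((v : ℝ) * (α x + n / 2)) * ‖lam v m‖) *
        (dyadicCube n (v : ℤ) m).indicator (fun _ => (1 : ℝ≥0∞)) x

/-- The sequence space norm ‖λ‖_{f^{α(·)}_{∞,q}}. -/
def seqNormInf {n : ℕ} (α : En n → ℝ) (q : ℝ) (lam : ℕ → (Fin n → ℤ) → ℂ) : ℝ≥0∞ :=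
  ⨆ (vQ : ℤ) (mQ : Fin n → ℤ),
    volume (dyadicCube n vQ mQ) ^ (-(1 / q)) *
      (∑' v : ℕ, if vQ ≤ (v : ℤ) then
          ∫⁻ x in dyadicCube n vQ mQ,
            ∑' m : Fin n → ℤ,
              ENNReal.ofReal ((2 : ℝ) ^ ((v : ℝ) * (α x + n / 2) * q) * ‖lam v m‖ ^ q) *
                (dyadicCube n (v : ℤ) m).indicator (fun _ => (1 : ℝ≥0∞)) x
        else 0) ^ (1 / q)

/-- The Calderón product (quasi-)norm associated to two sequence space norms. -/
def calderonNorm {n : ℕ} (N0 N1 : (ℕ → (Fin n → ℤ) → ℂ) → ℝ≥0∞) (θ : ℝ)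
    (lam : ℕ → (Fin n → ℤ) → ℂ) : ℝ≥0∞ :=
  sInf {M : ℝ≥0∞ | ∃ μ ν : ℕ → (Fin n → ℤ) → ℂ, N0 μ ≤ 1 ∧ N1 ν ≤ 1 ∧
    ∀ v m, ENNReal.ofReal ‖lam v m‖ ≤
      M * ENNReal.ofReal ‖μ v m‖ ^ (1 - θ) * ENNReal.ofReal ‖ν v m‖ ^ θ}

/-!
Divide both sequences by their norms. With `r = p₀ / q₀` and `t = (1 - θ) q / q₀`, the claim
becomes a bound for `∫ (∑ᵥ uᵥᵗ wᵥ¹⁻ᵗ)^{r(x)/t}`, where `uᵥ` and `wᵥ` are the `q₀`-th and `q₁`-th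
powers of the weighted coefficients, `∫ (∑ᵥ uᵥ)^{r(x)} ≤ 1`, and the norm in the endpoint space
`f_{∞,q₁}` says that `w` satisfies a Carleson packing condition. With the partial sums
`Uᵥ = u₀ + ⋯ + uᵥ`, write `uᵥᵗ wᵥ¹⁻ᵗ = (uᵥ Uᵥ^{-g})ᵗ (wᵥ Uᵥ^{gt/(1-t)})¹⁻ᵗ`, where `g` is a small
multiple of `r(x)`, and apply Hölder's inequality to the sum. The first factor telescopes:
`∑ᵥ uᵥ Uᵥ^{-g} ≤ 2 (∑ᵥ uᵥ)^{1-g}`. The second is `∑ᵥ wᵥ Uᵥ^{r(x)/k}` with a constant exponent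
`k ≥ 1`, to which Carleson's embedding theorem in `L^k` applies: log-Hölder continuity of `r`
bounds `Uᵥ^{r(x)}`, up to an integrable error, by its infimum over the dyadic cube of level `v`,
which increases with `v` and is constant on those cubes.
-/

section PartialSums

/-- The inclusive partial sum `u 0 + ⋯ + u v`, so that `u v ≤ partialSum u v`. -/
def partialSum (u : ℕ → ℝ≥0∞) (v : ℕ) : ℝ≥0∞ := ∑ j ∈ Finset.range (v + 1), u j

lemma partialSum_zero (u : ℕ → ℝ≥0∞) : partialSum u 0 = u 0 := by simp [partialSum]

lemma partialSum_succ (u : ℕ → ℝ≥0∞) (v : ℕ) :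
    partialSum u (v + 1) = partialSum u v + u (v + 1) := Finset.sum_range_succ _ _

lemma partialSum_mono (u : ℕ → ℝ≥0∞) : Monotone (partialSum u) := fun _ _ h =>
  Finset.sum_le_sum_of_subset (Finset.range_mono (by omega))

lemma le_partialSum (u : ℕ → ℝ≥0∞) (v : ℕ) : u v ≤ partialSum u v :=
  Finset.single_le_sum (fun _ _ => zero_le) (Finset.self_mem_range_succ v)

lemma partialSum_le_tsum (u : ℕ → ℝ≥0∞) (v : ℕ) : partialSum u v ≤ ∑' j, u j :=
  ENNReal.sum_le_tsum _

lemma iSup_partialSum (u : ℕ → ℝ≥0∞) : ⨆ v, partialSum u v = ∑' j, u j := by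
  rw [ENNReal.tsum_eq_iSup_nat]
  exact le_antisymm (iSup_le fun v => le_iSup (fun i => ∑ j ∈ Finset.range i, u j) (v + 1))
    (iSup_mono fun v => Finset.sum_le_sum_of_subset (Finset.range_mono v.le_succ))

lemma rpow_mul_rpow_le_weighted_add {g : ℝ} (hg₀ : 0 ≤ g) (hg₁ : g ≤ 1) {a b : ℝ≥0∞} (ha : a ≠ ⊤)
    (hb : b ≠ ⊤) :
    a ^ (1 - g) * b ^ g ≤ ENNReal.ofReal (1 - g) * a + ENNReal.ofReal g * b := by
  lift a to NNReal using ha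
  lift b to NNReal using hb
  have h1g : 0 ≤ 1 - g := sub_nonneg.2 hg₁
  rw [← ENNReal.coe_rpow_of_nonneg _ h1g, ← ENNReal.coe_rpow_of_nonneg _ hg₀, ENNReal.ofReal,
    ENNReal.ofReal]
  norm_cast
  simpa [hg₀, h1g] using NNReal.geom_mean_le_arith_mean2_weighted (1 - g).toNNReal g.toNNReal a b
    (by rw [← Real.toNNReal_add h1g hg₀]; simp)

lemma rpow_add_mul_rpow_neg_le {g : ℝ} (hg₀ : 0 ≤ g) (hg₁ : g < 1) (a u : ℝ≥0∞) :
    a ^ (1 - g) + ENNReal.ofReal (1 - g) * (u * (a + u) ^ (-g)) ≤ (a + u) ^ (1 - g) := by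
  have h1g : 0 < 1 - g := sub_pos.2 hg₁
  rcases eq_or_ne (a + u) ⊤ with htop | htop
  · simp [htop, h1g]
  rcases eq_or_ne (a + u) 0 with hzero | hzero
  · obtain ⟨rfl, rfl⟩ := add_eq_zero.1 hzero
    simp [h1g]
  have ha : a ≠ ⊤ := ne_top_of_le_ne_top htop le_self_add
  set b := a + u with hb
  have hcancel : b ^ g * b ^ (-g) = 1 := by rw [← ENNReal.rpow_add _ _ hzero htop]; simp
  have hweighted : a ^ (1 - g) * b ^ g + ENNReal.ofReal (1 - g) * u ≤ b :=
    calc a ^ (1 - g) * b ^ g + ENNReal.ofReal (1 - g) * u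
        ≤ ENNReal.ofReal (1 - g) * a + ENNReal.ofReal g * b + ENNReal.ofReal (1 - g) * u := by
          gcongr
          exact rpow_mul_rpow_le_weighted_add hg₀ hg₁.le ha htop
      _ = (ENNReal.ofReal (1 - g) + ENNReal.ofReal g) * b := by rw [hb]; ring
      _ = b := by rw [← ENNReal.ofReal_add h1g.le hg₀]; simp
  calc a ^ (1 - g) + ENNReal.ofReal (1 - g) * (u * b ^ (-g))
      = a ^ (1 - g) * (b ^ g * b ^ (-g)) + ENNReal.ofReal (1 - g) * (u * b ^ (-g)) := by
        rw [hcancel, mul_one]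
    _ = (a ^ (1 - g) * b ^ g + ENNReal.ofReal (1 - g) * u) * b ^ (-g) := by ring
    _ ≤ b * b ^ (-g) := by gcongr
    _ = b ^ (1 - g) := by
        rw [sub_eq_add_neg, ENNReal.rpow_add _ _ hzero htop, ENNReal.rpow_one]

lemma mul_rpow_sub_one {k : ℝ} (hk : 1 ≤ k) (a : ℝ≥0∞) : a * a ^ (k - 1) = a ^ k := by
  simpa using (ENNReal.rpow_add_of_nonneg (x := a) 1 (k - 1) zero_le_one (sub_nonneg.2 hk)).symm

lemma ofReal_mul_rpow_sub_one_mul_le {k : ℝ} (hk : 1 ≤ k) {a b : ℝ≥0∞} (ha : a ≠ ⊤) (hb : b ≠ ⊤) :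
    ENNReal.ofReal k * (b ^ (k - 1) * a) ≤ ENNReal.ofReal (k - 1) * b ^ k + a ^ k := by
  have hk₀ : 0 < k := one_pos.trans_le hk
  have hexp : k * (1 - k⁻¹) = k - 1 := by field_simp
  have hmean := rpow_mul_rpow_le_weighted_add (inv_nonneg.2 hk₀.le) (inv_le_one_of_one_le₀ hk)
    (ENNReal.rpow_ne_top_of_nonneg hk₀.le hb) (ENNReal.rpow_ne_top_of_nonneg hk₀.le ha)
  rw [← ENNReal.rpow_mul, ← ENNReal.rpow_mul, hexp, mul_inv_cancel₀ hk₀.ne',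
    ENNReal.rpow_one] at hmean
  calc _ ≤ ENNReal.ofReal k * _ := mul_le_mul_right hmean _
    _ = _ := by
      rw [mul_add, ← mul_assoc, ← mul_assoc, ← ENNReal.ofReal_mul hk₀.le,
        ← ENNReal.ofReal_mul hk₀.le, hexp, mul_inv_cancel₀ hk₀.ne', ENNReal.ofReal_one, one_mul]

lemma add_rpow_le_rpow_add_mul {k : ℝ} (hk : 1 ≤ k) (a u : ℝ≥0∞) :
    (a + u) ^ k ≤ a ^ k + ENNReal.ofReal k * (u * (a + u) ^ (k - 1)) := by
  have hk₀ : 0 < k := one_pos.trans_le hk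
  rcases eq_or_ne a ⊤ with rfl | ha
  · simp [hk₀]
  rcases eq_or_ne u ⊤ with rfl | hu
  · rcases hk.eq_or_lt with rfl | hk₁
    · simp
    · simp [hk₀, sub_pos.2 hk₁]
  have hau : a + u ≠ ⊤ := ENNReal.add_ne_top.2 ⟨ha, hu⟩
  refine ENNReal.le_of_add_le_add_left (a := ENNReal.ofReal (k - 1) * (a + u) ^ k)
    (ENNReal.mul_ne_top ENNReal.ofReal_ne_top (ENNReal.rpow_ne_top_of_nonneg hk₀.le hau)) ?_
  calc ENNReal.ofReal (k - 1) * (a + u) ^ k + (a + u) ^ k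
      = ENNReal.ofReal k * (a + u) ^ k := by
        rw [← add_one_mul, ← ENNReal.ofReal_one, ← ENNReal.ofReal_add (sub_nonneg.2 hk) zero_le_one,
          sub_add_cancel]
    _ = ENNReal.ofReal k * ((a + u) ^ (k - 1) * a) +
          ENNReal.ofReal k * (u * (a + u) ^ (k - 1)) := by
        rw [← mul_rpow_sub_one hk]
        ring
    _ ≤ ENNReal.ofReal (k - 1) * (a + u) ^ k +
          (a ^ k + ENNReal.ofReal k * (u * (a + u) ^ (k - 1))) := by
        rw [← add_assoc]
        gcongr
        exact ofReal_mul_rpow_sub_one_mul_le hk ha hau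

lemma ofReal_mul_tsum_mul_partialSum_rpow_neg_le {g : ℝ} (hg₀ : 0 ≤ g) (hg₁ : g < 1)
    (u : ℕ → ℝ≥0∞) :
    ENNReal.ofReal (1 - g) * ∑' v, u v * partialSum u v ^ (-g) ≤ (∑' v, u v) ^ (1 - g) := by
  have hpartial (N : ℕ) : partialSum (fun v => ENNReal.ofReal (1 - g) *
      (u v * partialSum u v ^ (-g))) N ≤ partialSum u N ^ (1 - g) := by
    induction N with
    | zero => simpa [partialSum_zero, sub_pos.2 hg₁] using rpow_add_mul_rpow_neg_le hg₀ hg₁ 0 (u 0)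
    | succ N ih =>
      rw [partialSum_succ, partialSum_succ u]
      exact (add_le_add_left ih _).trans (rpow_add_mul_rpow_neg_le hg₀ hg₁ _ _)
  rw [← ENNReal.tsum_mul_left, ← iSup_partialSum]
  exact iSup_le fun N => (hpartial N).trans (by gcongr; exact partialSum_le_tsum u N)

lemma tsum_mul_partialSum_rpow_neg_le {g : ℝ} (hg₀ : 0 ≤ g) (hg : g ≤ 1 / 2) (u : ℕ → ℝ≥0∞) :
    ∑' v, u v * partialSum u v ^ (-g) ≤ 2 * (∑' v, u v) ^ (1 - g) := by
  have hone : 1 ≤ 2 * ENNReal.ofReal (1 - g) := by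
    rw [← ENNReal.ofReal_ofNat 2, ← ENNReal.ofReal_mul zero_le_two]
    exact ENNReal.one_le_ofReal.2 (by linarith)
  calc ∑' v, u v * partialSum u v ^ (-g)
      ≤ 2 * ENNReal.ofReal (1 - g) * ∑' v, u v * partialSum u v ^ (-g) :=
        le_mul_of_one_le_left' hone
    _ ≤ 2 * (∑' v, u v) ^ (1 - g) := by
        rw [mul_assoc]
        gcongr
        exact ofReal_mul_tsum_mul_partialSum_rpow_neg_le hg₀ (by linarith) u

lemma partialSum_rpow_le {k : ℝ} (hk : 1 ≤ k) (u : ℕ → ℝ≥0∞) (N : ℕ) :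
    partialSum u N ^ k ≤
      ENNReal.ofReal k * partialSum (fun v => u v * partialSum u v ^ (k - 1)) N := by
  have hk₀ : 0 < k := one_pos.trans_le hk
  induction N with
  | zero => simpa [partialSum_zero, hk₀] using add_rpow_le_rpow_add_mul hk 0 (u 0)
  | succ N ih =>
    rw [partialSum_succ (fun v => u v * _), mul_add, partialSum_succ u]
    exact (add_rpow_le_rpow_add_mul hk _ _).trans (add_le_add_left ih _)

lemma tsum_rpow_mul_rpow_le {ι : Type*} {t : ℝ} (ht₀ : 0 ≤ t) (ht₁ : t ≤ 1) (f g : ι → ℝ≥0∞) :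
    ∑' i, f i ^ t * g i ^ (1 - t) ≤ (∑' i, f i) ^ t * (∑' i, g i) ^ (1 - t) := by
  let _ : MeasurableSpace ι := ⊤
  simpa only [lintegral_count] using ENNReal.lintegral_mul_norm_pow_le (μ := Measure.count)
    (f := f) (g := g) measurable_from_top.aemeasurable measurable_from_top.aemeasurable ht₀
    (sub_nonneg.2 ht₁) (by ring)

lemma rpow_mul_rpow_le_add {g : ℝ} (hg₀ : 0 ≤ g) (hg₁ : g ≤ 1) (a b : ℝ≥0∞) :
    a ^ (1 - g) * b ^ g ≤ a + b := by
  calc a ^ (1 - g) * b ^ g ≤ max a b ^ (1 - g) * max a b ^ g := by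
        have := sub_nonneg.2 hg₁
        gcongr
        exacts [le_max_left a b, le_max_right a b]
    _ = max a b := by rw [← ENNReal.rpow_add_of_nonneg _ _ (sub_nonneg.2 hg₁) hg₀]; simp
    _ ≤ a + b := max_le le_self_add le_add_self

lemma tsum_rpow_mul_rpow_le_weighted {t g : ℝ} (ht₀ : 0 < t) (ht₁ : t < 1)
    {u : ℕ → ℝ≥0∞} (hu : ∑' v, u v ≠ ⊤) (w : ℕ → ℝ≥0∞) :
    ∑' v, u v ^ t * w v ^ (1 - t) ≤
      (∑' v, u v * partialSum u v ^ (-g)) ^ t *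
        (∑' v, w v * partialSum u v ^ (g * t / (1 - t))) ^ (1 - t) := by
  have h1t : 0 < 1 - t := sub_pos.2 ht₁
  refine le_of_eq_of_le (tsum_congr fun v => ?_) (tsum_rpow_mul_rpow_le ht₀.le ht₁.le _ _)
  rcases eq_or_ne (u v) 0 with hzero | hzero
  · simp [hzero, ht₀]
  have hU₀ : partialSum u v ≠ 0 := (pos_of_ne_zero hzero |>.trans_le (le_partialSum u v)).ne'
  have hU : partialSum u v ≠ ⊤ := ne_top_of_le_ne_top hu (partialSum_le_tsum u v)
  have hcancel : partialSum u v ^ (-g * t) * partialSum u v ^ (g * t) = 1 := by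
    rw [← ENNReal.rpow_add _ _ hU₀ hU]; simp
  rw [ENNReal.mul_rpow_of_nonneg _ _ ht₀.le, ENNReal.mul_rpow_of_nonneg _ _ h1t.le,
    ← ENNReal.rpow_mul, ← ENNReal.rpow_mul, div_mul_cancel₀ _ h1t.ne', mul_mul_mul_comm, hcancel,
    mul_one]

lemma tsum_rpow_mul_rpow_rpow_le {t r R k : ℝ} (ht₀ : 0 < t) (ht₁ : t < 1) (hr₀ : 0 < r)
    (hrR : r ≤ R) (hk₀ : 0 < k) (hk : 2 * R * (1 - t) ≤ k * t) (u w : ℕ → ℝ≥0∞) :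
    (∑' v, u v ^ t * w v ^ (1 - t)) ^ (r / t) ≤
      2 ^ R * ((∑' v, u v) ^ r + (∑' v, w v * (partialSum u v ^ r) ^ k⁻¹) ^ k) := by
  have h1t : 0 < 1 - t := sub_pos.2 ht₁
  rcases eq_or_ne (∑' v, u v) ⊤ with htop | htop
  · have h2 : (2 : ℝ≥0∞) ^ R ≠ 0 := by simp
    simp [htop, hr₀, ENNReal.mul_top h2]
  set g := r * (1 - t) / (k * t) with hg
  have hg₀ : 0 < g := by positivity
  have hg₂ : g ≤ 1 / 2 := by
    rw [hg, div_le_iff₀ (by positivity)]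
    nlinarith
  have hsum := tsum_mul_partialSum_rpow_neg_le hg₀.le hg₂ u
  have hexp : g * t / (1 - t) = r * k⁻¹ := by rw [hg]; field_simp
  have hF := tsum_rpow_mul_rpow_le_weighted (g := g) ht₀ ht₁ htop w
  simp only [hexp, ENNReal.rpow_mul] at hF
  set F := ∑' v, w v * (partialSum u v ^ r) ^ k⁻¹
  calc (∑' v, u v ^ t * w v ^ (1 - t)) ^ (r / t)
      ≤ ((2 * (∑' v, u v) ^ (1 - g)) ^ t * F ^ (1 - t)) ^ (r / t) := by
        gcongr
        exact hF.trans (by gcongr)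
    _ = 2 ^ r * (((∑' v, u v) ^ r) ^ (1 - g) * (F ^ k) ^ g) := by
        rw [ENNReal.mul_rpow_of_nonneg _ _ (by positivity), ← ENNReal.rpow_mul, ← ENNReal.rpow_mul,
          mul_div_cancel₀ _ ht₀.ne', ENNReal.mul_rpow_of_nonneg _ _ hr₀.le, ← ENNReal.rpow_mul,
          ← ENNReal.rpow_mul, ← ENNReal.rpow_mul, mul_assoc, mul_comm (1 - g) r]
        have hexp' : (1 - t) * (r / t) = k * g := by rw [hg]; field_simp
        rw [← hexp']
    _ ≤ 2 ^ R * ((∑' v, u v) ^ r + F ^ k) := by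
        gcongr
        · exact one_le_two
        · exact rpow_mul_rpow_le_add hg₀.le (by linarith) _ _

lemma tsum_rpow_mul_rpow_rpow_le_of_partialSum_rpow_le {t r R k : ℝ} (ht₀ : 0 < t) (ht₁ : t < 1)
    (hr₀ : 0 < r) (hrR : r ≤ R) (hk₀ : 0 < k) (hk : 2 * R * (1 - t) ≤ k * t) {u b : ℕ → ℝ≥0∞}
    (w : ℕ → ℝ≥0∞) {C : ℝ≥0∞} (hub : ∀ v, partialSum u v ^ r ≤ C * b v) :
    (∑' v, u v ^ t * w v ^ (1 - t)) ^ (r / t) ≤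
      2 ^ R * ((∑' v, u v) ^ r + C * (∑' v, w v * b v ^ k⁻¹) ^ k) := by
  refine (tsum_rpow_mul_rpow_rpow_le ht₀ ht₁ hr₀ hrR hk₀ hk u w).trans ?_
  gcongr
  calc (∑' v, w v * (partialSum u v ^ r) ^ k⁻¹) ^ k ≤ (∑' v, w v * (C * b v) ^ k⁻¹) ^ k := by
        gcongr with v
        exact hub v
    _ = C * (∑' v, w v * b v ^ k⁻¹) ^ k := by
        simp only [ENNReal.mul_rpow_of_nonneg _ _ (inv_nonneg.2 hk₀.le), mul_left_comm (w _),
          ENNReal.tsum_mul_left, ENNReal.mul_rpow_of_nonneg _ _ hk₀.le,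
          ENNReal.rpow_inv_rpow hk₀.ne']

end PartialSums

section Carleson

lemma lintegral_mul_le_of_forall_setLIntegral_le {X : Type*} {m m0 : MeasurableSpace X}
    {μ : Measure X} {K : ℝ≥0∞} (hm : m ≤ m0) {φ g : X → ℝ≥0∞} (hφ : Measurable[m] φ)
    (hg : Measurable g) (h : ∀ A, MeasurableSet[m] A → ∫⁻ x in A, g x ∂μ ≤ K * μ A) :
    ∫⁻ x, φ x * g x ∂μ ≤ K * ∫⁻ x, φ x ∂μ := by
  have hle : (μ.withDensity g).trim hm ≤ (K • μ).trim hm := Measure.le_iff.2 fun A hA => by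
    rw [trim_measurableSet_eq hm hA, trim_measurableSet_eq hm hA, withDensity_apply _ (hm A hA)]
    simpa using h A hA
  calc ∫⁻ x, φ x * g x ∂μ = ∫⁻ x, φ x ∂(μ.withDensity g) := by
        rw [lintegral_withDensity_eq_lintegral_mul _ hg (hφ.mono hm le_rfl)]
        simp only [Pi.mul_apply, mul_comm]
    _ = ∫⁻ x, φ x ∂((μ.withDensity g).trim hm) := (lintegral_trim hm hφ).symm
    _ ≤ ∫⁻ x, φ x ∂((K • μ).trim hm) := lintegral_mono' hle le_rfl
    _ = K * ∫⁻ x, φ x ∂μ := by rw [lintegral_trim hm hφ, lintegral_smul_measure, smul_eq_mul]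

variable {X : Type*} {m0 : MeasurableSpace X} {μ : Measure X} {ℱ : Filtration ℕ m0} {K : ℝ≥0∞}
  {ω γ h : ℕ → X → ℝ≥0∞}

/-- A sequence `ω` of densities on a filtered measure space satisfies the Carleson packing condition
with constant `K` if the mass that its tail from level `j` on gives to an event of level `j` is at
most `K` times the measure of that event. -/
def IsCarleson (μ : Measure X) (ℱ : Filtration ℕ m0) (K : ℝ≥0∞) (ω : ℕ → X → ℝ≥0∞) : Prop :=
  ∀ j A, MeasurableSet[ℱ j] A → ∑' i, ∫⁻ x in A, ω (j + i) x ∂μ ≤ K * μ A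

namespace IsCarleson

lemma mono (hω : IsCarleson μ ℱ K ω) {ω' : ℕ → X → ℝ≥0∞} (h : ∀ v x, ω' v x ≤ ω v x) :
    IsCarleson μ ℱ K ω' := fun j A hA =>
  (ENNReal.tsum_le_tsum fun _ => lintegral_mono fun _ => h _ _).trans (hω j A hA)

lemma const_mul (hω : IsCarleson μ ℱ K ω) {a : ℝ≥0∞} (ha : a ≠ ⊤) :
    IsCarleson μ ℱ (a * K) fun v x => a * ω v x := fun j A hA => by
  simpa only [lintegral_const_mul' _ _ ha, ENNReal.tsum_mul_left, mul_assoc] using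
    mul_le_mul_right (hω j A hA) a

lemma lintegral_mul_tsum_le (hω : IsCarleson μ ℱ K ω) (hωm : ∀ v, Measurable (ω v))
    {j : ℕ} {φ : X → ℝ≥0∞} (hφ : Measurable[ℱ j] φ) :
    ∫⁻ x, φ x * ∑' i, ω (j + i) x ∂μ ≤ K * ∫⁻ x, φ x ∂μ :=
  lintegral_mul_le_of_forall_setLIntegral_le (ℱ.le j) hφ (Measurable.tsum fun _ => hωm _)
    fun A hA => by
      rw [lintegral_tsum fun _ => (hωm _).aemeasurable]
      exact hω j A hA

/-- Including the mass which the levels from `N` on would give to `γ N` makes this bound inductive: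
passing to `N + 1` only adds the contribution of the increment `γ (N + 1) - γ N`. -/
lemma lintegral_sum_add_mul_tsum_le (hω : IsCarleson μ ℱ K ω) (hωm : ∀ v, Measurable (ω v))
    (hγ : ∀ v, Measurable[ℱ v] (γ v)) (hmono : Monotone γ) (N : ℕ) :
    ∫⁻ x, (∑ v ∈ Finset.range N, ω v x * γ v x + γ N x * ∑' i, ω (N + i) x) ∂μ ≤
      K * ∫⁻ x, γ N x ∂μ := by
  induction N with
  | zero => simpa using hω.lintegral_mul_tsum_le hωm (hγ 0)
  | succ N ih =>
    have hγN : Measurable[ℱ (N + 1)] (γ N) := (hγ N).mono (ℱ.mono N.le_succ) le_rfl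
    set δ : X → ℝ≥0∞ := fun x => γ (N + 1) x - γ N x
    have hδ : Measurable[ℱ (N + 1)] δ := (hγ (N + 1)).sub hγN
    have hsplit (x : X) : γ (N + 1) x = γ N x + δ x :=
      (add_tsub_cancel_of_le (hmono N.le_succ x)).symm
    have hpoint (x : X) : ∑ v ∈ Finset.range (N + 1), ω v x * γ v x +
        γ (N + 1) x * ∑' i, ω (N + 1 + i) x =
          (∑ v ∈ Finset.range N, ω v x * γ v x + γ N x * ∑' i, ω (N + i) x) +
            δ x * ∑' i, ω (N + 1 + i) x := by
      rw [Finset.sum_range_succ, hsplit, tsum_eq_zero_add' (f := fun i => ω (N + i) x)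
        ENNReal.summable]
      simp only [add_zero, Nat.add_right_comm N 1, Nat.add_assoc N]
      ring
    calc _ = ∫⁻ x, (∑ v ∈ Finset.range N, ω v x * γ v x + γ N x * ∑' i, ω (N + i) x) ∂μ +
          ∫⁻ x, δ x * ∑' i, ω (N + 1 + i) x ∂μ := by
          simp only [hpoint]
          exact lintegral_add_right _ ((hδ.mono (ℱ.le _) le_rfl).mul
            (Measurable.tsum fun _ => hωm _))
      _ ≤ K * ∫⁻ x, γ N x ∂μ + K * ∫⁻ x, δ x ∂μ :=
          add_le_add ih (hω.lintegral_mul_tsum_le hωm hδ)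
      _ = K * ∫⁻ x, γ (N + 1) x ∂μ := by
          rw [← mul_add, ← lintegral_add_right _ (hδ.mono (ℱ.le _) le_rfl)]
          simp only [hsplit]

lemma lintegral_partialSum_mul_le (hω : IsCarleson μ ℱ K ω) (hωm : ∀ v, Measurable (ω v))
    (hγ : ∀ v, Measurable[ℱ v] (γ v)) (hmono : Monotone γ) (N : ℕ) :
    ∫⁻ x, partialSum (fun v => ω v x * γ v x) N ∂μ ≤ K * ∫⁻ x, γ N x ∂μ := by
  refine (lintegral_mono fun x => ?_).trans (hω.lintegral_sum_add_mul_tsum_le hωm hγ hmono N)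
  rw [partialSum, Finset.sum_range_succ, mul_comm (ω N x)]
  gcongr
  exact ENNReal.le_tsum 0

end IsCarleson

lemma mul_rpow_sub_one_le {k : ℝ} (hk : 1 ≤ k) (a f : ℝ≥0∞) :
    a * f ^ (k - 1) ≤ f ^ k / 2 + (2 * a) ^ k := by
  have := sub_nonneg.2 hk
  rcases le_total (2 * a) f with h | h
  · refine le_add_right ?_
    rw [← mul_rpow_sub_one hk f, ENNReal.mul_div_right_comm]
    gcongr
    rwa [ENNReal.le_div_iff_mul_le (by simp) (by simp), mul_comm]
  · refine le_add_left ?_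
    rw [← mul_rpow_sub_one hk (2 * a)]
    gcongr
    exact le_mul_of_one_le_left' one_le_two

lemma le_two_mul_of_le_half_add {a b : ℝ≥0∞} (ha : a ≠ ⊤) (h : a ≤ a / 2 + b) : a ≤ 2 * b := by
  have hhalf : a / 2 ≤ b := by
    refine ENNReal.le_of_add_le_add_left (a := a / 2) (ENNReal.div_ne_top ha (by simp)) ?_
    rwa [ENNReal.add_halves]
  calc a = 2 * (a / 2) := (ENNReal.mul_div_cancel (by simp) (by simp)).symm
    _ ≤ 2 * b := by gcongr

namespace IsCarleson

lemma lintegral_partialSum_mul_rpow_ne_top {k : ℝ} (hk : 0 ≤ k) (hK : K ≠ ⊤)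
    (hωK : ∀ v x, ω v x ≤ K) (hmono : Monotone h) (N : ℕ) (hfin : ∫⁻ x, h N x ^ k ∂μ ≠ ⊤) :
    ∫⁻ x, partialSum (fun v => ω v x * h v x) N ^ k ∂μ ≠ ⊤ := by
  have hbound (x : X) : partialSum (fun v => ω v x * h v x) N ≤ (N + 1) * K * h N x :=
    calc partialSum (fun v => ω v x * h v x) N ≤ ∑ _v ∈ Finset.range (N + 1), K * h N x :=
          Finset.sum_le_sum fun v hv => mul_le_mul' (hωK v x)
            (hmono (Nat.le_of_lt_succ (Finset.mem_range.1 hv)) x)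
      _ = (N + 1) * K * h N x := by simp [mul_assoc]
  have hc : ((N + 1) * K) ^ k ≠ ⊤ := ENNReal.rpow_ne_top_of_nonneg hk (by finiteness)
  refine ne_top_of_le_ne_top (ENNReal.mul_ne_top hc hfin) ?_
  rw [← lintegral_const_mul' _ _ hc]
  gcongr with x
  rw [← ENNReal.mul_rpow_of_nonneg _ _ hk]
  gcongr
  exact hbound x

lemma measurable_partialSum_mul (hωm : ∀ v, Measurable[ℱ v] (ω v))
    (hh : ∀ v, Measurable[ℱ v] (h v)) (N : ℕ) :
    Measurable[ℱ N] fun x => partialSum (fun v => ω v x * h v x) N :=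
  Finset.measurable_fun_sum _ fun v hv =>
    ((hωm v).mul (hh v)).mono (ℱ.mono (Nat.le_of_lt_succ (Finset.mem_range.1 hv))) le_rfl

lemma lintegral_partialSum_mul_rpow_le {k : ℝ} (hk : 1 ≤ k) (hω : IsCarleson μ ℱ K ω)
    (hK : K ≠ ⊤) (hωK : ∀ v x, ω v x ≤ K) (hωm : ∀ v, Measurable[ℱ v] (ω v))
    (hh : ∀ v, Measurable[ℱ v] (h v)) (hmono : Monotone h) (N : ℕ)
    (hfin : ∫⁻ x, h N x ^ k ∂μ ≠ ⊤) :
    ∫⁻ x, partialSum (fun v => ω v x * h v x) N ^ k ∂μ ≤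
      2 * ((2 * (ENNReal.ofReal k * K)) ^ k * ∫⁻ x, h N x ^ k ∂μ) := by
  have hk₀ : 0 < k := one_pos.trans_le hk
  have hkK : ENNReal.ofReal k * K ≠ ⊤ := ENNReal.mul_ne_top ENNReal.ofReal_ne_top hK
  set f : ℕ → X → ℝ≥0∞ := fun N x => partialSum (fun v => ω v x * h v x) N
  have hf (N : ℕ) : Measurable[ℱ N] (f N) := measurable_partialSum_mul hωm hh N
  have hfm : Measurable (f N) := (hf N).mono (ℱ.le N) le_rfl
  have hγmono : Monotone fun v x => h v x * f v x ^ (k - 1) := fun i j hij x =>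
    mul_le_mul' (hmono hij x)
      (ENNReal.rpow_le_rpow (partialSum_mono _ hij) (sub_nonneg.2 hk))
  refine le_two_mul_of_le_half_add
    (lintegral_partialSum_mul_rpow_ne_top hk₀.le hK hωK hmono N hfin) ?_
  calc ∫⁻ x, f N x ^ k ∂μ
      ≤ ∫⁻ x, ENNReal.ofReal k * partialSum (fun v => ω v x * (h v x * f v x ^ (k - 1))) N ∂μ :=
        lintegral_mono fun x => by
          simpa only [mul_assoc] using partialSum_rpow_le hk (fun v => ω v x * h v x) N
    _ ≤ ENNReal.ofReal k * (K * ∫⁻ x, h N x * f N x ^ (k - 1) ∂μ) := by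
        rw [lintegral_const_mul' _ _ ENNReal.ofReal_ne_top]
        gcongr
        exact hω.lintegral_partialSum_mul_le (fun v => (hωm v).mono (ℱ.le v) le_rfl)
          (fun v => (hh v).mul ((hf v).pow_const _)) hγmono N
    _ = ∫⁻ x, ENNReal.ofReal k * K * h N x * f N x ^ (k - 1) ∂μ := by
        rw [← mul_assoc, ← lintegral_const_mul' _ _ hkK]
        simp only [mul_assoc]
    _ ≤ ∫⁻ x, (f N x ^ k / 2 + (2 * (ENNReal.ofReal k * K * h N x)) ^ k) ∂μ := by
        gcongr with x
        exact mul_rpow_sub_one_le hk _ _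
    _ = (∫⁻ x, f N x ^ k ∂μ) / 2 +
          (2 * (ENNReal.ofReal k * K)) ^ k * ∫⁻ x, h N x ^ k ∂μ := by
        rw [lintegral_add_left ((hfm.pow_const k).div_const 2),
          ← lintegral_const_mul' _ _ (ENNReal.rpow_ne_top_of_nonneg hk₀.le (by finiteness))]
        simp only [div_eq_mul_inv, ← mul_assoc (2 : ℝ≥0∞), ENNReal.mul_rpow_of_nonneg _ _ hk₀.le,
          lintegral_mul_const' _ _ (ENNReal.inv_ne_top.2 two_ne_zero)]

lemma lintegral_tsum_mul_rpow_le {k : ℝ} (hk : 1 ≤ k) (hω : IsCarleson μ ℱ K ω)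
    (hK : K ≠ ⊤) (hωK : ∀ v x, ω v x ≤ K) (hωm : ∀ v, Measurable[ℱ v] (ω v))
    (hh : ∀ v, Measurable[ℱ v] (h v)) (hmono : Monotone h) {H : X → ℝ≥0∞}
    (hhH : ∀ v x, h v x ^ k ≤ H x) (hfin : ∫⁻ x, H x ∂μ ≠ ⊤) :
    ∫⁻ x, (∑' v, ω v x * h v x) ^ k ∂μ ≤
      2 * ((2 * (ENNReal.ofReal k * K)) ^ k * ∫⁻ x, H x ∂μ) := by
  have hk₀ : 0 < k := one_pos.trans_le hk
  have hsup (x : X) : (∑' v, ω v x * h v x) ^ k =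
      ⨆ N, partialSum (fun v => ω v x * h v x) N ^ k := by
    rw [← iSup_partialSum]
    exact (ENNReal.orderIsoRpow k hk₀).map_iSup _
  simp only [hsup]
  have hsum (N : ℕ) : Measurable fun x => partialSum (fun v => ω v x * h v x) N :=
    (measurable_partialSum_mul hωm hh N).mono (ℱ.le N) le_rfl
  rw [lintegral_iSup (fun N => (hsum N).pow_const k)
    fun i j hij x => ENNReal.rpow_le_rpow (partialSum_mono _ hij) hk₀.le]
  refine iSup_le fun N => ?_
  have hle : ∫⁻ x, h N x ^ k ∂μ ≤ ∫⁻ x, H x ∂μ := lintegral_mono fun x => hhH N x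
  refine (hω.lintegral_partialSum_mul_rpow_le hk hK hωK hωm hh hmono N
    (ne_top_of_le_ne_top hfin hle)).trans ?_
  gcongr

end IsCarleson

end Carleson

section DyadicCubes

variable {n : ℕ}

/-- The index `m` of the dyadic cube `Q_{v,m}` of level `v` that contains `x`. -/
def dyadicIndex (v : ℕ) (x : En n) : Fin n → ℤ := fun i => ⌊(2 : ℝ) ^ v * x i⌋

lemma dyadicCube_eq_preimage (v : ℕ) (m : Fin n → ℤ) :
    dyadicCube n (v : ℤ) m = dyadicIndex v ⁻¹' {m} := by
  ext x
  simp only [dyadicCube, mem_ofPred_eq, dyadicIndex, mem_preimage, mem_singleton_iff, funext_iff,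
    Int.floor_eq_iff, zpow_natCast]

lemma measurable_dyadicIndex (v : ℕ) : Measurable (dyadicIndex v : En n → Fin n → ℤ) :=
  measurable_pi_lambda _ fun _ => Int.measurable_floor.comp (by fun_prop)

lemma measurableSet_dyadicCube (v : ℕ) (m : Fin n → ℤ) :
    MeasurableSet (dyadicCube n (v : ℤ) m) := by
  rw [dyadicCube_eq_preimage]
  exact measurable_dyadicIndex v (measurableSet_singleton m)

lemma volume_dyadicCube (v : ℕ) (m : Fin n → ℤ) :
    volume (dyadicCube n (v : ℤ) m) = ((2 ^ v)⁻¹) ^ n := by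
  have hpi : dyadicCube n (v : ℤ) m = (WithLp.ofLp : En n → Fin n → ℝ) ⁻¹'
      (Set.univ.pi fun i => Set.Ico ((m i : ℝ) / 2 ^ v) (((m i : ℝ) + 1) / 2 ^ v)) := by
    ext x
    simp only [dyadicCube, mem_ofPred_eq, mem_preimage, mem_pi, mem_univ, true_imp_iff, mem_Ico,
      zpow_natCast]
    refine forall_congr' fun i => ?_
    rw [div_le_iff₀ (by positivity), lt_div_iff₀ (by positivity), mul_comm]
  rw [hpi, (PiLp.volume_preserving_ofLp (Fin n)).measure_preimage
    (MeasurableSet.univ_pi fun i => measurableSet_Ico).nullMeasurableSet, Real.volume_pi_Ico]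
  simp [← sub_div, ENNReal.ofReal_inv_of_pos, ENNReal.ofReal_pow]

lemma volume_dyadicCube_ne_zero (v : ℕ) (m : Fin n → ℤ) :
    volume (dyadicCube n (v : ℤ) m) ≠ 0 := by
  rw [volume_dyadicCube]
  exact pow_ne_zero _ (ENNReal.inv_ne_zero.2 (by finiteness))

lemma volume_dyadicCube_ne_top (v : ℕ) (m : Fin n → ℤ) :
    volume (dyadicCube n (v : ℤ) m) ≠ ⊤ := by
  rw [volume_dyadicCube]
  exact ENNReal.pow_ne_top (ENNReal.inv_ne_top.2 (by positivity))

lemma dyadicIndex_eq_of_le {j v : ℕ} (hjv : j ≤ v) {x y : En n}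
    (h : dyadicIndex v x = dyadicIndex v y) : dyadicIndex j x = dyadicIndex j y := by
  have hfloor (z : ℝ) : ⌊(2 : ℝ) ^ j * z⌋ = ⌊(2 : ℝ) ^ v * z⌋ / ((2 ^ (v - j) : ℕ) : ℤ) := by
    rw [← Int.floor_div_natCast, Nat.cast_pow, Nat.cast_ofNat, ← pow_mul_pow_sub 2 hjv,
      mul_right_comm, mul_div_cancel_right₀ _ (by positivity)]
  funext i
  simpa only [dyadicIndex, hfloor] using
    congrArg (· / ((2 ^ (v - j) : ℕ) : ℤ)) (congrFun h i)

lemma norm_sub_le_of_dyadicIndex_eq {v : ℕ} {x y : En n} (h : dyadicIndex v x = dyadicIndex v y) :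
    2 ^ v * ‖x - y‖ ≤ √n := by
  have hcoord (i : Fin n) : ‖((2 : ℝ) ^ v • (x - y)) i‖ ≤ 1 := by
    simpa [mul_sub] using (Int.abs_sub_lt_one_of_floor_eq_floor (congrFun h i)).le
  calc 2 ^ v * ‖x - y‖ = ‖(2 : ℝ) ^ v • (x - y)‖ := by simp [norm_smul]
    _ ≤ √(∑ _i : Fin n, 1) := by
        rw [EuclideanSpace.norm_eq]
        gcongr with i
        exact pow_le_one₀ (norm_nonneg _) (hcoord i)
    _ = √n := by simp

lemma measurable_comap_dyadicIndex {β : Type*} [MeasurableSpace β] [Nonempty β] {v : ℕ}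
    {f : En n → β} (hf : f.FactorsThrough (dyadicIndex v)) :
    Measurable[MeasurableSpace.comap (dyadicIndex v) inferInstance] f := by
  obtain ⟨e, rfl⟩ := (Function.factorsThrough_iff f).1 hf
  exact (measurable_of_countable e).comp (comap_measurable _)

/-- The filtration of `ℝⁿ` whose level `v` is generated by the dyadic cubes of side `2⁻ᵛ`. -/
def dyadicFiltration (n : ℕ) : Filtration ℕ (inferInstance : MeasurableSpace (En n)) where
  seq v := MeasurableSpace.comap (dyadicIndex v) inferInstance
  mono' _ _ hjv := measurable_iff_comap_le.1 <| measurable_comap_dyadicIndex fun _ _ =>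
    dyadicIndex_eq_of_le hjv
  le' v := (measurable_dyadicIndex v).comap_le

lemma isCarleson_of_forall_dyadicCube {K : ℝ≥0∞} {ω : ℕ → En n → ℝ≥0∞}
    (h : ∀ (j : ℕ) (m : Fin n → ℤ), ∑' i, ∫⁻ x in dyadicCube n (j : ℤ) m, ω (j + i) x ≤
      K * volume (dyadicCube n (j : ℤ) m)) :
    IsCarleson volume (dyadicFiltration n) K ω := by
  intro j A hA
  obtain ⟨S, -, rfl⟩ := MeasurableSpace.measurableSet_comap.1 hA
  have hunion : dyadicIndex j ⁻¹' S = ⋃ m ∈ S, dyadicCube n (j : ℤ) m := by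
    simp only [dyadicCube_eq_preimage, Set.biUnion_preimage_singleton]
  have hdisj : S.PairwiseDisjoint fun m => dyadicCube n (j : ℤ) m := by
    simp only [dyadicCube_eq_preimage]
    exact fun m _ m' _ hmm' => Disjoint.preimage _ (by simpa using hmm')
  have hmeas (m) (_ : m ∈ S) := measurableSet_dyadicCube j m
  simp only [hunion, lintegral_biUnion S.to_countable hmeas hdisj]
  rw [ENNReal.tsum_comm, measure_biUnion S.to_countable hdisj hmeas, ← ENNReal.tsum_mul_left]
  exact ENNReal.tsum_le_tsum fun m => h j m

lemma IsCarleson.le_of_factorsThrough {K : ℝ≥0∞} {ω : ℕ → En n → ℝ≥0∞}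
    (hω : IsCarleson volume (dyadicFiltration n) K ω)
    (hωc : ∀ v, (ω v).FactorsThrough (dyadicIndex v)) (v : ℕ) (x : En n) : ω v x ≤ K := by
  set Q := dyadicCube n (v : ℤ) (dyadicIndex v x) with hQ
  have hQm : MeasurableSet[dyadicFiltration n v] Q :=
    MeasurableSpace.measurableSet_comap.2
      ⟨_, measurableSet_singleton _, (dyadicCube_eq_preimage v _).symm⟩
  have hconst : ∫⁻ y in Q, ω v y = ω v x * volume Q := by
    rw [← setLIntegral_const]
    refine setLIntegral_congr_fun (measurableSet_dyadicCube v _) fun y hy => hωc v ?_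
    rwa [hQ, dyadicCube_eq_preimage] at hy
  have hle : ω v x * volume Q ≤ K * volume Q := hconst ▸ (ENNReal.le_tsum 0).trans (hω v Q hQm)
  exact (ENNReal.mul_le_mul_iff_left (volume_dyadicCube_ne_zero v _)
    (volume_dyadicCube_ne_top v _)).1 hle

/-- The largest minorant of `f` that is constant on the dyadic cubes of level `v`. -/
def dyadicInf (v : ℕ) (f : En n → ℝ≥0∞) (x : En n) : ℝ≥0∞ :=
  ⨅ y : {y : En n // dyadicIndex v x = dyadicIndex v y}, f y

lemma dyadicInf_le_of_eq {v : ℕ} {x y : En n} (hxy : dyadicIndex v x = dyadicIndex v y)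
    (f : En n → ℝ≥0∞) : dyadicInf v f x ≤ f y :=
  iInf_le (fun y : {y : En n // dyadicIndex v x = dyadicIndex v y} => f y) ⟨y, hxy⟩

lemma le_dyadicInf {v : ℕ} {f : En n → ℝ≥0∞} {x : En n} {a : ℝ≥0∞}
    (h : ∀ y, dyadicIndex v x = dyadicIndex v y → a ≤ f y) : a ≤ dyadicInf v f x :=
  le_iInf fun y => h y y.2

lemma mul_dyadicInf {a : ℝ≥0∞} (ha : a ≠ ⊤) (v : ℕ) (f : En n → ℝ≥0∞) (x : En n) :
    a * dyadicInf v f x = dyadicInf v (fun y => a * f y) x :=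
  have : Nonempty {y : En n // dyadicIndex v x = dyadicIndex v y} := ⟨x, rfl⟩
  ENNReal.mul_iInf fun h => absurd h ha

lemma dyadicInf_factorsThrough (v : ℕ) (f : En n → ℝ≥0∞) :
    (dyadicInf v f).FactorsThrough (dyadicIndex v) := fun x y hxy => by
  rw [dyadicInf, dyadicInf, hxy]

lemma dyadicInf_mono (f : En n → ℝ≥0∞) : Monotone fun v => dyadicInf v f := fun _ _ hjv _ =>
  le_dyadicInf fun _ hy => dyadicInf_le_of_eq (dyadicIndex_eq_of_le hjv hy) f

/-- `f` varies by a factor of at most `M` on each dyadic cube of level `v`. -/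
def AlmostConstOnCubes (M : NNReal) (v : ℕ) (f : En n → ℝ≥0∞) : Prop :=
  ∀ x y, dyadicIndex v x = dyadicIndex v y → f x ≤ M * f y

namespace AlmostConstOnCubes

variable {M : NNReal} {v : ℕ} {f : En n → ℝ≥0∞}

lemma mono (hf : AlmostConstOnCubes M v f) {M' : NNReal} (hM : M ≤ M') :
    AlmostConstOnCubes M' v f := fun x y hxy => (hf x y hxy).trans (by gcongr)

lemma div_rpow (hf : AlmostConstOnCubes M v f) {q : ℝ} (hq : 0 ≤ q) (c : ℝ≥0∞) :
    AlmostConstOnCubes (M ^ q) v fun x => (f x / c) ^ q := fun x y hxy => by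
  simp only [ENNReal.coe_rpow_of_nonneg _ hq, ← ENNReal.mul_rpow_of_nonneg _ _ hq,
    ← mul_div_assoc]
  gcongr
  exact hf x y hxy

lemma le_mul_dyadicInf (hf : AlmostConstOnCubes M v f) (x : En n) : f x ≤ M * dyadicInf v f x := by
  rw [mul_dyadicInf ENNReal.coe_ne_top]
  exact le_dyadicInf (hf x)

lemma partialSum {u : ℕ → En n → ℝ≥0∞}
    (hu : ∀ v, AlmostConstOnCubes M v (u v)) (N : ℕ) :
    AlmostConstOnCubes M N fun x => partialSum (fun v => u v x) N := fun x y hxy => by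
  simp only [_root_.partialSum, Finset.mul_sum]
  exact Finset.sum_le_sum fun v hv =>
    hu v x y (dyadicIndex_eq_of_le (Nat.le_of_lt_succ (Finset.mem_range.1 hv)) hxy)

end AlmostConstOnCubes

end DyadicCubes

section LogHolder

variable {n : ℕ} {c : ℝ} {g : En n → ℝ}

lemma rpow_le_exp_of_le_div_log {b B d c : ℝ} (hb : 0 ≤ b) (hbB : b ≤ B) (hB : 1 < B) (hd : 0 ≤ d)
    (h : d ≤ c / Real.log B) : b ^ d ≤ Real.exp c :=
  calc b ^ d ≤ B ^ d := Real.rpow_le_rpow hb hbB hd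
    _ = Real.exp (Real.log B * d) := Real.rpow_def_of_pos (by positivity) d
    _ ≤ Real.exp c := by
        rw [le_div_iff₀ (Real.log_pos hB)] at h
        exact Real.exp_le_exp.2 (by linarith)

lemma div_log_exp_one_add_le {c s : ℝ} (hc : 0 ≤ c) (hs : 0 ≤ s) :
    c / Real.log (Real.exp 1 + s) ≤ c := by
  refine div_le_self hc ?_
  rw [Real.le_log_iff_exp_le (by positivity)]
  linarith

namespace LocLogHolder

lemma abs_sub_le (h : LocLogHolder c g) (x y : En n) : |g x - g y| ≤ c :=
  (h.2 x y).trans (div_log_exp_one_add_le h.1.le (by positivity))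

lemma continuous (h : LocLogHolder c g) : Continuous g := by
  refine continuous_iff_continuousAt.2 fun x => continuousAt_iff_punctured_nhds.2 ?_
  have hinv : Filter.Tendsto (fun y => ‖y - x‖⁻¹) (nhdsWithin x {x}ᶜ) Filter.atTop :=
    Filter.Tendsto.inv_tendsto_nhdsGT_zero (tendsto_norm_sub_self_nhdsNE x)
  have hlog : Filter.Tendsto (fun y => c / Real.log (Real.exp 1 + 1 / ‖y - x‖))
      (nhdsWithin x {x}ᶜ) (nhds 0) := by
    simp only [one_div]
    exact (Real.tendsto_log_atTop.comp
      (Filter.tendsto_atTop_add_const_left _ _ hinv)).const_div_atTop c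
  exact tendsto_iff_norm_sub_tendsto_zero.2
    (squeeze_zero (fun _ => norm_nonneg _) (fun y => h.2 y x) hlog)

lemma inv_norm_sub_rpow_le (h : LocLogHolder c g) (x y : En n) :
    ‖x - y‖⁻¹ ^ |g x - g y| ≤ Real.exp c := by
  have he := Real.add_one_lt_exp one_ne_zero
  have hinv : 0 ≤ ‖x - y‖⁻¹ := by positivity
  exact rpow_le_exp_of_le_div_log (B := Real.exp 1 + ‖x - y‖⁻¹) hinv (by linarith) (by linarith)
    (abs_nonneg _) (by simpa only [one_div] using h.2 x y)

lemma exists_two_pow_rpow_le (h : LocLogHolder c g) :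
    ∃ C : ℝ, ∀ (v : ℕ) (x y : En n), dyadicIndex v x = dyadicIndex v y →
      ((2 : ℝ) ^ v) ^ |g x - g y| ≤ C := by
  refine ⟨(1 + √n) ^ c * Real.exp c, fun v x y hxy => ?_⟩
  have hs : 1 ≤ 1 + √(n : ℝ) := by simp
  have hc := h.1
  rcases eq_or_ne x y with rfl | hne
  · have := one_le_mul_of_one_le_of_one_le (Real.one_le_rpow hs hc.le) (Real.one_le_exp hc.le)
    simpa using this
  have hd : 0 < ‖x - y‖ := norm_pos_iff.2 (sub_ne_zero.2 hne)
  calc ((2 : ℝ) ^ v) ^ |g x - g y| ≤ ((1 + √n) * ‖x - y‖⁻¹) ^ |g x - g y| := by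
        gcongr
        rw [← div_eq_mul_inv, le_div_iff₀ hd]
        linarith [norm_sub_le_of_dyadicIndex_eq hxy]
    _ = (1 + √n) ^ |g x - g y| * ‖x - y‖⁻¹ ^ |g x - g y| :=
        Real.mul_rpow (by positivity) (by positivity)
    _ ≤ (1 + √n) ^ c * Real.exp c := by
        gcongr
        · exact h.abs_sub_le x y
        · exact h.inv_norm_sub_rpow_le x y

end LocLogHolder

namespace GlobLogHolder

lemma exists_le (h : GlobLogHolder c g) : ∃ R, ∀ x, g x ≤ R := by
  obtain ⟨-, gi, cd, hcd, hg⟩ := h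
  refine ⟨gi + cd, fun x => ?_⟩
  linarith [le_abs_self (g x - gi), (hg x).trans (div_log_exp_one_add_le hcd.le (norm_nonneg x))]

lemma div_const (h : GlobLogHolder c g) {a : ℝ} (ha : 0 < a) :
    GlobLogHolder (c / a) fun x => g x / a := by
  obtain ⟨⟨hc, hg⟩, gi, cd, hcd, hg'⟩ := h
  refine ⟨⟨div_pos hc ha, fun x y => ?_⟩, gi / a, cd / a, div_pos hcd ha, fun x => ?_⟩
  · rw [← sub_div, abs_div, abs_of_pos ha, div_right_comm]
    gcongr
    exact hg x y
  · rw [← sub_div, abs_div, abs_of_pos ha, div_right_comm]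
    gcongr
    exact hg' x

lemma exists_one_add_norm_rpow_le (h : GlobLogHolder c g) :
    ∃ C : ℝ, ∀ (v : ℕ) (x y : En n), dyadicIndex v x = dyadicIndex v y →
      (1 + ‖y‖) ^ |g x - g y| ≤ C := by
  obtain ⟨-, gi, cd, hcd, hg⟩ := h
  have hlim (x : En n) : (1 + ‖x‖) ^ |g x - gi| ≤ Real.exp cd := by
    have he := Real.add_one_lt_exp one_ne_zero
    exact rpow_le_exp_of_le_div_log (by positivity) (by linarith)
      (by linarith [norm_nonneg x]) (abs_nonneg _) (hg x)
  refine ⟨(1 + √n) ^ cd * Real.exp cd * Real.exp cd, fun v x y hxy => ?_⟩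
  have hdist : ‖x - y‖ ≤ √n :=
    (le_mul_of_one_le_left (norm_nonneg _) (one_le_pow₀ one_le_two)).trans
      (norm_sub_le_of_dyadicIndex_eq hxy)
  have hyx : 1 + ‖y‖ ≤ (1 + √n) * (1 + ‖x‖) := by
    nlinarith [norm_sub_norm_le y x, norm_sub_rev x y, norm_nonneg x, Real.sqrt_nonneg n]
  calc (1 + ‖y‖) ^ |g x - g y| ≤ (1 + ‖y‖) ^ (|g x - gi| + |g y - gi|) := by
        gcongr
        · simp
        · rw [abs_sub_comm (g y)]
          exact _root_.abs_sub_le _ _ _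
    _ = (1 + ‖y‖) ^ |g x - gi| * (1 + ‖y‖) ^ |g y - gi| := Real.rpow_add (by positivity) _ _
    _ ≤ ((1 + √n) * (1 + ‖x‖)) ^ |g x - gi| * Real.exp cd := by
        gcongr
        exact hlim y
    _ = (1 + √n) ^ |g x - gi| * (1 + ‖x‖) ^ |g x - gi| * Real.exp cd := by
        rw [Real.mul_rpow (by positivity) (by positivity)]
    _ ≤ (1 + √n) ^ cd * Real.exp cd * Real.exp cd := by
        gcongr
        · simp
        · exact (hg x).trans (div_log_exp_one_add_le hcd.le (norm_nonneg x))
        · exact hlim x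

lemma exists_two_pow_mul_rpow_le (h : GlobLogHolder c g) :
    ∃ C : ℝ≥0∞, C ≠ ⊤ ∧ ∀ (v : ℕ) (x y : En n), dyadicIndex v x = dyadicIndex v y →
      (2 ^ v * (1 + ‖y‖ₑ)) ^ |g x - g y| ≤ C := by
  obtain ⟨C₁, hC₁⟩ := h.1.exists_two_pow_rpow_le
  obtain ⟨C₂, hC₂⟩ := h.exists_one_add_norm_rpow_le
  refine ⟨ENNReal.ofReal (C₁ * C₂), ENNReal.ofReal_ne_top, fun v x y hxy => ?_⟩
  have hreal : 2 ^ v * (1 + ‖y‖ₑ) = ENNReal.ofReal (2 ^ v * (1 + ‖y‖)) := by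
    rw [ENNReal.ofReal_mul (by positivity), ENNReal.ofReal_add zero_le_one (norm_nonneg y),
      ofReal_norm, ENNReal.ofReal_pow zero_le_two, ENNReal.ofReal_one, ENNReal.ofReal_ofNat]
  rw [hreal, ENNReal.ofReal_rpow_of_nonneg (by positivity) (abs_nonneg _),
    Real.mul_rpow (by positivity) (by positivity)]
  gcongr
  · exact (Real.rpow_nonneg (by positivity) _).trans (hC₁ v x y hxy)
  · exact hC₁ v x y hxy
  · exact hC₂ v x y hxy

end GlobLogHolder

lemma lintegral_one_add_enorm_rpow_neg_ne_top {E : Type*} [NormedAddCommGroup E] [NormedSpace ℝ E]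
    [FiniteDimensional ℝ E] [MeasurableSpace E] [BorelSpace E] (μ : Measure E) [μ.IsAddHaarMeasure]
    {s : ℝ} (hs : Module.finrank ℝ E < s) : ∫⁻ x : E, (1 + ‖x‖ₑ) ^ (-s) ∂μ ≠ ⊤ := by
  convert (finite_integral_one_add_norm (μ := μ) hs).ne using 3 with x
  rw [← ENNReal.ofReal_rpow_of_pos (by positivity), ENNReal.ofReal_add zero_le_one (norm_nonneg x),
    ENNReal.ofReal_one, ofReal_norm]

lemma rpow_le_rpow_abs_sub_mul {Y B : ℝ≥0∞} (hB : B ≠ ⊤) (hBY : B⁻¹ ≤ Y) (hYB : Y ≤ B) (a b : ℝ) :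
    Y ^ a ≤ B ^ |a - b| * Y ^ b := by
  have hY₀ : Y ≠ 0 := ((ENNReal.inv_pos.2 hB).trans_le hBY).ne'
  rw [← sub_add_cancel a b, ENNReal.rpow_add _ _ hY₀ (ne_top_of_le_ne_top hB hYB),
    add_sub_cancel_right]
  gcongr
  rcases le_total 0 (a - b) with h | h
  · rw [abs_of_nonneg h]
    gcongr
  · rw [abs_of_nonpos h, ← neg_neg (a - b), ENNReal.rpow_neg, ← ENNReal.inv_rpow, neg_neg]
    have := neg_nonneg.2 h
    gcongr
    exact ENNReal.inv_le_iff_inv_le.1 hBY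

lemma dyadicInf_le_of_lintegral_rpow_le_one {δ : ℝ} (hδ : 0 < δ) {r : En n → ℝ}
    (hr : ∀ x, δ ≤ r x) {U : En n → ℝ≥0∞} (hU : ∫⁻ x, U x ^ r x ≤ 1) (v : ℕ) (x : En n) :
    dyadicInf v U x ≤ (2 ^ v) ^ (n / δ) := by
  set Y := dyadicInf v U x
  set Q := dyadicCube n (v : ℤ) (dyadicIndex v x) with hQ
  rcases le_total Y 1 with hY | hY
  · refine hY.trans ?_
    rw [← ENNReal.rpow_zero (x := 2 ^ v)]
    exact ENNReal.rpow_le_rpow_of_exponent_le (one_le_pow₀ one_le_two) (by positivity)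
  have hYU (y) (hy : y ∈ Q) : Y ^ δ ≤ U y ^ r y := by
    rw [hQ, dyadicCube_eq_preimage] at hy
    calc Y ^ δ ≤ Y ^ r y := ENNReal.rpow_le_rpow_of_exponent_le hY (hr y)
      _ ≤ U y ^ r y := by
          have := hδ.le.trans (hr y)
          gcongr
          exact dyadicInf_le_of_eq (Eq.symm hy) U
  have hvol : Y ^ δ * volume Q ≤ 1 :=
    calc Y ^ δ * volume Q = ∫⁻ _ in Q, Y ^ δ := (setLIntegral_const _ _).symm
      _ ≤ ∫⁻ y in Q, U y ^ r y := setLIntegral_mono' (measurableSet_dyadicCube v _) hYU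
      _ ≤ 1 := (setLIntegral_le_lintegral _ _).trans hU
  rw [← ENNReal.le_div_iff_mul_le (Or.inl (volume_dyadicCube_ne_zero v _))
    (Or.inl (volume_dyadicCube_ne_top v _)), one_div, volume_dyadicCube, ENNReal.inv_pow,
    inv_inv] at hvol
  calc Y = (Y ^ δ) ^ δ⁻¹ := (ENNReal.rpow_rpow_inv hδ.ne' Y).symm
    _ ≤ ((2 ^ v) ^ n) ^ δ⁻¹ := by gcongr
    _ = (2 ^ v) ^ (n / δ) := by rw [← ENNReal.rpow_natCast, ← ENNReal.rpow_mul, div_eq_mul_inv]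

lemma rpow_le_rpow_neg_of_le_inv_rpow {b Y : ℝ≥0∞} {s δ a : ℝ} (hb : 1 ≤ b) (hs : 0 ≤ s)
    (hδ : 0 < δ) (ha : δ ≤ a) (hY : Y ≤ (b ^ (s / δ))⁻¹) : Y ^ a ≤ b ^ (-s) := by
  have hbs : 1 ≤ b ^ (s / δ) := by
    rw [← ENNReal.rpow_zero (x := b)]
    exact ENNReal.rpow_le_rpow_of_exponent_le hb (by positivity)
  have := hδ.trans_le ha
  calc Y ^ a ≤ (b ^ (s / δ))⁻¹ ^ a := by gcongr
    _ ≤ (b ^ (s / δ))⁻¹ ^ δ :=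
        ENNReal.rpow_le_rpow_of_exponent_ge (ENNReal.inv_le_one.2 hbs) ha
    _ = b ^ (-s) := by
        rw [ENNReal.inv_rpow, ← ENNReal.rpow_neg, ← ENNReal.rpow_mul]
        congr 1
        field_simp

namespace GlobLogHolder

-- Values below `(2ᵛ(1 + ‖y‖))^{-(n + 1)/δ}` are absorbed by the integrable error term.
lemma exists_rpow_le (h : GlobLogHolder c g) {δ : ℝ} (hδ : 0 < δ) (hg : ∀ x, δ ≤ g x) :
    ∃ C : ℝ≥0∞, C ≠ ⊤ ∧ ∀ (v : ℕ) (x y : En n), dyadicIndex v x = dyadicIndex v y →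
      ∀ Y ≤ (2 ^ v) ^ (n / δ), Y ^ g x ≤ C * (Y ^ g y + (1 + ‖y‖ₑ) ^ (-(n + 1) : ℝ)) := by
  obtain ⟨C, hC, hle⟩ := h.exists_two_pow_mul_rpow_le
  refine ⟨max 1 (C ^ ((n + 1) / δ)), by finiteness, fun v x y hxy Y hY => ?_⟩
  have h2 : (1 : ℝ≥0∞) ≤ 2 ^ v := one_le_pow₀ one_le_two
  have hy : 1 ≤ 1 + ‖y‖ₑ := le_self_add
  set b := 2 ^ v * (1 + ‖y‖ₑ)
  have hyb : 1 + ‖y‖ₑ ≤ b := le_mul_of_one_le_left' h2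
  set B := b ^ ((n + 1) / δ) with hB
  rw [mul_add]
  rcases le_total B⁻¹ Y with hBY | hBY
  · have hYB : Y ≤ B :=
      calc Y ≤ (2 ^ v) ^ (n / δ) := hY
        _ ≤ (2 ^ v) ^ ((n + 1) / δ) := ENNReal.rpow_le_rpow_of_exponent_le h2 (by gcongr; simp)
        _ ≤ B := by
            rw [hB]
            gcongr
            exact le_mul_of_one_le_right' hy
    calc Y ^ g x ≤ B ^ |g x - g y| * Y ^ g y :=
          rpow_le_rpow_abs_sub_mul (by finiteness) hBY hYB _ _
      _ = (b ^ |g x - g y|) ^ ((n + 1) / δ) * Y ^ g y := by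
          rw [hB, ← ENNReal.rpow_mul, ← ENNReal.rpow_mul, mul_comm (_ / _)]
      _ ≤ C ^ ((n + 1) / δ) * Y ^ g y := by
          gcongr
          exact hle v x y hxy
      _ ≤ max 1 (C ^ ((n + 1) / δ)) * Y ^ g y := by
          gcongr
          exact le_max_right _ _
      _ ≤ _ := le_self_add
  · calc Y ^ g x ≤ b ^ (-(n + 1) : ℝ) :=
          rpow_le_rpow_neg_of_le_inv_rpow (hy.trans hyb) (by positivity) hδ (hg x) hBY
      _ ≤ (1 + ‖y‖ₑ) ^ (-(n + 1) : ℝ) := by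
          rw [ENNReal.rpow_neg, ENNReal.rpow_neg]
          gcongr
      _ ≤ max 1 (C ^ ((n + 1) / δ)) * (1 + ‖y‖ₑ) ^ (-(n + 1) : ℝ) :=
          le_mul_of_one_le_left' (le_max_left _ _)
      _ ≤ _ := le_add_self

lemma exists_rpow_le_mul_dyadicInf (h : GlobLogHolder c g) {δ : ℝ} (hδ : 0 < δ)
    (hg : ∀ x, δ ≤ g x) (M : NNReal) :
    ∃ C : ℝ≥0∞, C ≠ ⊤ ∧ ∀ (v : ℕ) (U : En n → ℝ≥0∞), AlmostConstOnCubes M v U →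
      ∫⁻ x, U x ^ g x ≤ 1 → ∀ x,
        U x ^ g x ≤ C * dyadicInf v (fun y => U y ^ g y + (1 + ‖y‖ₑ) ^ (-(n + 1) : ℝ)) x := by
  obtain ⟨C, hC, hle⟩ := h.exists_rpow_le hδ hg
  obtain ⟨R, hR⟩ := h.exists_le
  have : 0 ≤ R := (hδ.le.trans (hg 0)).trans (hR 0)
  refine ⟨max 1 (M : ℝ≥0∞) ^ R * C, by finiteness, fun v U hU hint x => ?_⟩
  have hM : (M : ℝ≥0∞) ^ g x ≤ max 1 (M : ℝ≥0∞) ^ R :=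
    calc (M : ℝ≥0∞) ^ g x ≤ max 1 (M : ℝ≥0∞) ^ g x := by
          have := hδ.le.trans (hg x)
          gcongr
          exact le_max_right _ _
      _ ≤ max 1 (M : ℝ≥0∞) ^ R := ENNReal.rpow_le_rpow_of_exponent_le (le_max_left _ _) (hR x)
  rw [mul_dyadicInf (by finiteness)]
  refine le_dyadicInf fun y hxy => ?_
  have hgx := hδ.le.trans (hg x)
  have hgy := hδ.le.trans (hg y)
  calc U x ^ g x ≤ (M * dyadicInf v U x) ^ g x := by
        gcongr
        exact hU.le_mul_dyadicInf x
    _ = M ^ g x * dyadicInf v U x ^ g x := ENNReal.mul_rpow_of_nonneg _ _ hgx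
    _ ≤ max 1 (M : ℝ≥0∞) ^ R * (C * (dyadicInf v U x ^ g y + (1 + ‖y‖ₑ) ^ (-(n + 1) : ℝ))) := by
        gcongr
        exact hle v x y hxy _ (dyadicInf_le_of_lintegral_rpow_le_one hδ hg hint v x)
    _ ≤ max 1 (M : ℝ≥0∞) ^ R * (C * (U y ^ g y + (1 + ‖y‖ₑ) ^ (-(n + 1) : ℝ))) := by
        gcongr
        exact dyadicInf_le_of_eq hxy U
    _ = _ := (mul_assoc _ _ _).symm

end GlobLogHolder

end LogHolder

section HolderCarleson

variable {n : ℕ}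

lemma IsCarleson.lintegral_tsum_mul_dyadicInf_rpow_le {K : ℝ≥0∞} {M : NNReal} {k : ℝ}
    {w : ℕ → En n → ℝ≥0∞} {H : En n → ℝ≥0∞} (hk : 1 ≤ k) (hK : K ≠ ⊤)
    (hw : IsCarleson volume (dyadicFiltration n) K w) (hwM : ∀ v, AlmostConstOnCubes M v (w v))
    (hH : ∫⁻ x, H x ≠ ⊤) :
    ∫⁻ x, (∑' v, w v x * dyadicInf v H x ^ k⁻¹) ^ k ≤
      (M : ℝ≥0∞) ^ k * (2 * ((2 * (ENNReal.ofReal k * K)) ^ k * ∫⁻ x, H x)) := by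
  have hk₀ : 0 < k := zero_lt_one.trans_le hk
  have hω : IsCarleson volume (dyadicFiltration n) K fun v => dyadicInf v (w v) :=
    hw.mono fun v x => dyadicInf_le_of_eq rfl (w v)
  have hωc (v : ℕ) := dyadicInf_factorsThrough v (w v)
  have hbound := hω.lintegral_tsum_mul_rpow_le (h := fun v x => dyadicInf v H x ^ k⁻¹) (H := H)
    hk hK (hω.le_of_factorsThrough hωc) (fun v => measurable_comap_dyadicIndex (hωc v))
    (fun v => (measurable_comap_dyadicIndex (dyadicInf_factorsThrough v H)).pow_const k⁻¹)
    (fun i j hij x => ENNReal.rpow_le_rpow (dyadicInf_mono H hij x) (by positivity))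
    (fun v x => by
      rw [ENNReal.rpow_inv_rpow hk₀.ne']
      exact dyadicInf_le_of_eq rfl H) hH
  calc ∫⁻ x, (∑' v, w v x * dyadicInf v H x ^ k⁻¹) ^ k
      ≤ ∫⁻ x, (M : ℝ≥0∞) ^ k * (∑' v, dyadicInf v (w v) x * dyadicInf v H x ^ k⁻¹) ^ k := by
        gcongr with x
        rw [← ENNReal.mul_rpow_of_nonneg _ _ hk₀.le, ← ENNReal.tsum_mul_left]
        simp only [← mul_assoc]
        gcongr with v
        exact (hwM v).le_mul_dyadicInf x
    _ = (M : ℝ≥0∞) ^ k * ∫⁻ x, (∑' v, dyadicInf v (w v) x * dyadicInf v H x ^ k⁻¹) ^ k :=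
        lintegral_const_mul' _ _ (by finiteness)
    _ ≤ _ := by gcongr

namespace GlobLogHolder

variable {c t δ : ℝ} {r : En n → ℝ}

lemma exists_partialSum_rpow_le_mul_dyadicInf (h : GlobLogHolder c r) (hδ : 0 < δ)
    (hr : ∀ x, δ ≤ r x) (M : NNReal) :
    ∃ C : ℝ≥0∞, C ≠ ⊤ ∧ ∀ u : ℕ → En n → ℝ≥0∞, (∀ v, AlmostConstOnCubes M v (u v)) →
      ∫⁻ x, (∑' v, u v x) ^ r x ≤ 1 → ∀ v x,
        partialSum (fun j => u j x) v ^ r x ≤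
          C * dyadicInf v (fun y => (∑' j, u j y) ^ r y + (1 + ‖y‖ₑ) ^ (-(n + 1) : ℝ)) x := by
  obtain ⟨C, hC, hle⟩ := h.exists_rpow_le_mul_dyadicInf hδ hr M
  refine ⟨C, hC, fun u hu hint v x => ?_⟩
  have hpart (y : En n) : partialSum (fun j => u j y) v ^ r y ≤ (∑' j, u j y) ^ r y :=
    ENNReal.rpow_le_rpow (partialSum_le_tsum _ v) (hδ.le.trans (hr y))
  refine (hle v _ (.partialSum hu v) ((lintegral_mono hpart).trans hint) x).trans ?_
  gcongr
  exact le_dyadicInf fun y hxy =>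
    (dyadicInf_le_of_eq hxy _).trans (add_le_add_left (hpart y) _)

lemma exists_lintegral_tsum_rpow_mul_rpow_le (h : GlobLogHolder c r) (hδ : 0 < δ)
    (hr : ∀ x, δ ≤ r x) (ht₀ : 0 < t) (ht₁ : t < 1) (M : NNReal) :
    ∃ C : ℝ≥0∞, C ≠ ⊤ ∧ ∀ u w : ℕ → En n → ℝ≥0∞, (∀ v, Measurable (u v)) →
      (∀ v, AlmostConstOnCubes M v (u v)) → (∀ v, AlmostConstOnCubes M v (w v)) →
      ∫⁻ x, (∑' v, u v x) ^ r x ≤ 1 → IsCarleson volume (dyadicFiltration n) 1 w →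
      ∫⁻ x, (∑' v, u v x ^ t * w v x ^ (1 - t)) ^ (r x / t) ≤ C := by
  obtain ⟨C, hC, hle⟩ := h.exists_partialSum_rpow_le_mul_dyadicInf hδ hr M
  obtain ⟨R, hR⟩ := h.exists_le
  set k := max 1 (2 * R * (1 - t) / t)
  have hk₁ : 1 ≤ k := le_max_left _ _
  have hk₀ : 0 < k := zero_lt_one.trans_le hk₁
  set J := ∫⁻ y : En n, (1 + ‖y‖ₑ) ^ (-(n + 1) : ℝ)
  have hJ : J ≠ ⊤ := lintegral_one_add_enorm_rpow_neg_ne_top volume (by simp)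
  have hR₀ : 0 ≤ R := (hδ.le.trans (hr 0)).trans (hR 0)
  refine ⟨2 ^ R * (1 + C * ((M : ℝ≥0∞) ^ k * (2 * ((2 * (ENNReal.ofReal k * 1)) ^ k * (1 + J))))),
    by finiteness, fun u w hum hu hw hint hcar => ?_⟩
  set S := fun x => (∑' v, u v x) ^ r x
  set H := fun y => S y + (1 + ‖y‖ₑ) ^ (-(n + 1) : ℝ)
  have hSm : Measurable S := (Measurable.tsum hum).pow h.1.continuous.measurable
  have hH : ∫⁻ y, H y ≤ 1 + J := by
    rw [lintegral_add_left hSm]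
    gcongr
  set G := fun x => (∑' v, w v x * dyadicInf v H x ^ k⁻¹) ^ k
  have hpointwise (x : En n) :
      (∑' v, u v x ^ t * w v x ^ (1 - t)) ^ (r x / t) ≤ 2 ^ R * (S x + C * G x) :=
    tsum_rpow_mul_rpow_rpow_le_of_partialSum_rpow_le ht₀ ht₁ (hδ.trans_le (hr x)) (hR x) hk₀
      ((div_le_iff₀ ht₀).1 (le_max_right _ _)) _ fun v => hle u hu hint v x
  calc ∫⁻ x, (∑' v, u v x ^ t * w v x ^ (1 - t)) ^ (r x / t)
      ≤ ∫⁻ x, 2 ^ R * (S x + C * G x) := lintegral_mono hpointwise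
    _ = 2 ^ R * ((∫⁻ x, S x) + C * ∫⁻ x, G x) := by
        rw [lintegral_const_mul' _ _ (by finiteness), lintegral_add_left hSm,
          lintegral_const_mul' _ _ hC]
    _ ≤ _ := by
        gcongr
        exact (hcar.lintegral_tsum_mul_dyadicInf_rpow_le hk₁ one_ne_top hw
          (ne_top_of_le_ne_top (by finiteness) hH)).trans (by gcongr)

end GlobLogHolder

end HolderCarleson

section LuxemburgNorm

variable {n : ℕ} {p : En n → ℝ} {F : En n → ℝ≥0∞} {δ : ℝ} {a : ℝ≥0∞}

lemma lintegral_div_rpow_le_one_of_luxNorm_lt (hp : ∀ x, 0 ≤ p x) (ha : luxNorm p F < a) :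
    ∫⁻ x, (F x / a) ^ p x ≤ 1 := by
  obtain ⟨c, ⟨-, hc⟩, hca⟩ := sInf_lt_iff.1 ha
  refine (lintegral_mono fun x => ?_).trans hc
  have := hp x
  gcongr

lemma luxNorm_le_of_lintegral_div_rpow_le {C D : ℝ≥0∞} (hδ : 0 < δ) (hp : ∀ x, δ ≤ p x)
    (hD : D ≠ 0) (hC : ∫⁻ x, (F x / D) ^ p x ≤ C) : luxNorm p F ≤ max 1 C ^ δ⁻¹ * D := by
  set A := max 1 C ^ δ⁻¹ with hA
  have hA₁ : 1 ≤ A := ENNReal.one_le_rpow (le_max_left _ _) (inv_pos.2 hδ)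
  have hA₀ : A ≠ 0 := (zero_lt_one.trans_le hA₁).ne'
  have hAδ : (A⁻¹) ^ δ = (max 1 C)⁻¹ := by
    rw [hA, ENNReal.inv_rpow, ENNReal.rpow_inv_rpow hδ.ne']
  refine sInf_le ⟨ENNReal.mul_pos hA₀ hD, ?_⟩
  calc ∫⁻ x, (F x / (A * D)) ^ p x ≤ ∫⁻ x, (max 1 C)⁻¹ * (F x / D) ^ p x := by
        gcongr with x
        rw [div_eq_mul_inv, ENNReal.mul_inv (Or.inl hA₀) (Or.inr hD), mul_left_comm,
          ← div_eq_mul_inv, ENNReal.mul_rpow_of_nonneg _ _ (hδ.le.trans (hp x)), ← hAδ]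
        gcongr ?_ * _
        exact ENNReal.rpow_le_rpow_of_exponent_ge (ENNReal.inv_le_one.2 hA₁) (hp x)
    _ = (max 1 C)⁻¹ * ∫⁻ x, (F x / D) ^ p x :=
        lintegral_const_mul' _ _ (ENNReal.inv_ne_top.2 (zero_lt_one.trans_le (le_max_left _ _)).ne')
    _ ≤ (max 1 C)⁻¹ * max 1 C := by
        gcongr
        exact hC.trans (le_max_right _ _)
    _ ≤ 1 := ENNReal.inv_mul_le_one _

lemma lintegral_rpow_le_rpow_of_luxNorm_lt (hp : ∀ x, δ ≤ p x) (hδ : 0 ≤ δ) (ha₁ : a ≤ 1)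
    (ha : luxNorm p F < a) : ∫⁻ x, F x ^ p x ≤ a ^ δ := by
  have ha₀ : a ≠ 0 := (bot_le.trans_lt ha).ne'
  have ha' : a ≠ ⊤ := ne_top_of_le_ne_top one_ne_top ha₁
  calc ∫⁻ x, F x ^ p x ≤ ∫⁻ x, a ^ δ * (F x / a) ^ p x := by
        gcongr with x
        have hp₀ := hδ.trans (hp x)
        calc F x ^ p x = a ^ p x * (F x / a) ^ p x := by
              rw [← ENNReal.mul_rpow_of_nonneg _ _ hp₀, ENNReal.mul_div_cancel ha₀ ha']
          _ ≤ a ^ δ * (F x / a) ^ p x := by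
              gcongr ?_ * _
              exact ENNReal.rpow_le_rpow_of_exponent_ge ha₁ (hp x)
    _ = a ^ δ * ∫⁻ x, (F x / a) ^ p x := lintegral_const_mul' _ _ (by finiteness)
    _ ≤ a ^ δ :=
        mul_le_of_le_one_right'
          (lintegral_div_rpow_le_one_of_luxNorm_lt (fun x => hδ.trans (hp x)) ha)

lemma ae_eq_zero_of_luxNorm_eq_zero (hδ : 0 < δ) (hp : ∀ x, δ ≤ p x) (hpm : Measurable p)
    (hF : Measurable F) (h : luxNorm p F = 0) : F =ᵐ[volume] 0 := by
  have hint : ∫⁻ x, F x ^ p x = 0 := by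
    refine nonpos_iff_eq_zero.1 (le_of_forall_gt_imp_ge_of_dense fun b hb => ?_)
    calc ∫⁻ x, F x ^ p x ≤ min 1 (b ^ δ⁻¹) ^ δ := by
          refine lintegral_rpow_le_rpow_of_luxNorm_lt hp hδ.le (min_le_left _ _) ?_
          rw [h]
          exact lt_min one_pos (ENNReal.rpow_pos_of_nonneg hb (by positivity))
      _ ≤ (b ^ δ⁻¹) ^ δ := by
          gcongr
          exact min_le_right _ _
      _ = b := ENNReal.rpow_inv_rpow hδ.ne' b
  filter_upwards [(lintegral_eq_zero_iff (hF.pow hpm)).1 hint] with x hx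
  exact (ENNReal.rpow_eq_zero_iff_of_pos (hδ.trans_le (hp x))).1 hx

lemma luxNorm_eq_zero_of_ae_eq_zero (hp : ∀ x, 0 < p x) (h : F =ᵐ[volume] 0) :
    luxNorm p F = 0 := by
  refine nonpos_iff_eq_zero.1 (le_of_forall_gt_imp_ge_of_dense fun b hb => sInf_le ⟨hb, ?_⟩)
  have hzero : ∀ᵐ x, (F x / b) ^ p x = 0 := by
    filter_upwards [h] with x hx
    simp [hx, hp x]
  simp [lintegral_congr_ae hzero]

lemma tsum_rpow_rpow_div_rpow {q : ℝ} (hq : 0 < q) (f : ℕ → ℝ≥0∞) (c : ℝ≥0∞) (s : ℝ) :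
    ((∑' v, f v ^ q) ^ (1 / q) / c) ^ s = (∑' v, (f v / c) ^ q) ^ (s / q) := by
  simp only [ENNReal.div_rpow_of_nonneg _ _ hq.le, div_eq_mul_inv (_ ^ q), ENNReal.tsum_mul_right]
  rw [div_eq_inv_mul s q, ENNReal.rpow_mul, ENNReal.mul_rpow_of_nonneg _ _ (inv_nonneg.2 hq.le),
    ENNReal.inv_rpow, ENNReal.rpow_rpow_inv hq.ne', one_div, div_eq_mul_inv]

lemma div_rpow_mul_rpow_le {θ : ℝ} (hθ₀ : 0 ≤ θ) (hθ₁ : θ ≤ 1) {d a b c₀ c₁ : ℝ≥0∞}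
    (hc₀ : c₀ ≠ 0) (hc₁ : c₁ ≠ 0) (hd : d ≤ a ^ (1 - θ) * b ^ θ) :
    d / (c₀ ^ (1 - θ) * c₁ ^ θ) ≤ (a / c₀) ^ (1 - θ) * (b / c₁) ^ θ := by
  have h1 : 0 ≤ 1 - θ := sub_nonneg.2 hθ₁
  have hc₀' : c₀ ^ (1 - θ) ≠ 0 := (ENNReal.rpow_pos_of_nonneg (pos_of_ne_zero hc₀) h1).ne'
  have hc₁' : c₁ ^ θ ≠ 0 := (ENNReal.rpow_pos_of_nonneg (pos_of_ne_zero hc₁) hθ₀).ne'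
  rw [ENNReal.div_rpow_of_nonneg _ _ h1, ENNReal.div_rpow_of_nonneg _ _ hθ₀, div_eq_mul_inv,
    div_eq_mul_inv, div_eq_mul_inv, mul_mul_mul_comm,
    ENNReal.mul_inv (Or.inl hc₀') (Or.inr hc₁')]
  gcongr

end LuxemburgNorm

section SequenceSpaces

variable {n : ℕ} {α : En n → ℝ} {q : ℝ} {lam : ℕ → (Fin n → ℤ) → ℂ}

/-- The value `2^{v(α(x) + n/2)} |λ_{v,m}|` at `x`, where `Q_{v,m}` is the cube of level `v` that
contains `x`: the only nonzero term of the sum over `m` in the sequence space norms. -/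
def weightedCoeff (α : En n → ℝ) (lam : ℕ → (Fin n → ℤ) → ℂ) (v : ℕ) (x : En n) : ℝ≥0∞ :=
  ENNReal.ofReal ((2 : ℝ) ^ ((v : ℝ) * (α x + n / 2)) * ‖lam v (dyadicIndex v x)‖)

lemma tsum_mul_indicator_dyadicCube (v : ℕ) (f : (Fin n → ℤ) → ℝ≥0∞) (x : En n) :
    ∑' m, f m * (dyadicCube n (v : ℤ) m).indicator (fun _ => (1 : ℝ≥0∞)) x =
      f (dyadicIndex v x) := by
  rw [tsum_eq_single (dyadicIndex v x) fun m hm => ?_]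
  · simp [dyadicCube_eq_preimage]
  · simp [dyadicCube_eq_preimage, hm.symm]

lemma seqNorm_const_eq_luxNorm (α p : En n → ℝ) (q : ℝ) (lam : ℕ → (Fin n → ℤ) → ℂ) :
    seqNorm α p (fun _ => q) lam =
      luxNorm p fun x => (∑' v, weightedCoeff α lam v x ^ q) ^ (1 / q) := by
  simp only [seqNorm, mixedNorm, tsum_mul_indicator_dyadicCube, weightedCoeff]

lemma measurable_weightedCoeff (hα : Measurable α) (lam : ℕ → (Fin n → ℤ) → ℂ) (v : ℕ) :
    Measurable (weightedCoeff α lam v) := by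
  have hlam : Measurable fun x : En n => ‖lam v (dyadicIndex v x)‖ :=
    (measurable_of_countable fun m => ‖lam v m‖).comp (measurable_dyadicIndex v)
  exact (Measurable.mul (by fun_prop) hlam).ennreal_ofReal

lemma LocLogHolder.exists_almostConstOnCubes_weightedCoeff {c : ℝ} (h : LocLogHolder c α) :
    ∃ M : NNReal, ∀ lam v, AlmostConstOnCubes M v (weightedCoeff α lam v) := by
  obtain ⟨C, hC⟩ := h.exists_two_pow_rpow_le
  refine ⟨C.toNNReal, fun lam v x y hxy => ?_⟩
  have hweight : (2 : ℝ) ^ (v * (α x + n / 2)) ≤ C * 2 ^ (v * (α y + n / 2)) :=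
    calc (2 : ℝ) ^ (v * (α x + n / 2)) ≤ 2 ^ (v * |α x - α y| + v * (α y + n / 2)) := by
          have hexp : α x + n / 2 ≤ |α x - α y| + (α y + n / 2) := by
            linarith [le_abs_self (α x - α y)]
          rw [← mul_add]
          exact Real.rpow_le_rpow_of_exponent_le one_le_two (by gcongr)
      _ = (2 ^ v) ^ |α x - α y| * 2 ^ (v * (α y + n / 2)) := by
          rw [Real.rpow_add two_pos, Real.rpow_mul zero_le_two, Real.rpow_natCast]
      _ ≤ C * 2 ^ (v * (α y + n / 2)) := by
          gcongr
          exact hC v x y hxy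
  rw [weightedCoeff, weightedCoeff, ENNReal.ofNNReal_toNNReal, ← ENNReal.ofReal_mul'
    (by positivity), hxy, ← mul_assoc]
  gcongr

lemma isCarleson_weightedCoeff_rpow (hq : 0 < q) (α : En n → ℝ) (lam : ℕ → (Fin n → ℤ) → ℂ) :
    IsCarleson volume (dyadicFiltration n) (seqNormInf α q lam ^ q)
      fun v x => weightedCoeff α lam v x ^ q := by
  refine isCarleson_of_forall_dyadicCube fun j m => ?_
  set Q := dyadicCube n (j : ℤ) m
  set S := ∑' v : ℕ, if (j : ℤ) ≤ v then ∫⁻ x in Q, weightedCoeff α lam v x ^ q else 0 with hS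
  have hle : volume Q ^ (-(1 / q)) * S ^ (1 / q) ≤ seqNormInf α q lam := by
    have hsup := le_iSup₂ (f := fun (vQ : ℤ) (mQ : Fin n → ℤ) =>
      volume (dyadicCube n vQ mQ) ^ (-(1 / q)) *
        (∑' v : ℕ, if vQ ≤ v then ∫⁻ x in dyadicCube n vQ mQ, weightedCoeff α lam v x ^ q
          else 0) ^ (1 / q)) j m
    have hpow (v : ℕ) (x : En n) : weightedCoeff α lam v x ^ q =
        ENNReal.ofReal (2 ^ (v * (α x + n / 2) * q) * ‖lam v (dyadicIndex v x)‖ ^ q) := by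
      rw [weightedCoeff, ENNReal.ofReal_rpow_of_nonneg (by positivity) hq.le,
        Real.mul_rpow (by positivity) (norm_nonneg _), ← Real.rpow_mul zero_le_two]
    simpa only [seqNormInf, tsum_mul_indicator_dyadicCube, hpow, hS] using hsup
  have hSle : S ≤ seqNormInf α q lam ^ q * volume Q := by
    rw [ENNReal.rpow_neg, ← ENNReal.inv_rpow, ← ENNReal.mul_rpow_of_nonneg _ _ (by positivity),
      one_div, ENNReal.rpow_inv_le_iff hq, mul_comm, ← div_eq_mul_inv] at hle
    exact (ENNReal.div_le_iff_le_mul (Or.inl (volume_dyadicCube_ne_zero j m))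
      (Or.inl (volume_dyadicCube_ne_top j m))).1 hle
  calc ∑' i, ∫⁻ x in Q, weightedCoeff α lam (j + i) x ^ q
      = ∑' i, (fun v : ℕ => if (j : ℤ) ≤ v then ∫⁻ x in Q, weightedCoeff α lam v x ^ q else 0)
          (j + i) := by simp
    _ ≤ S := ENNReal.tsum_comp_le_tsum_of_injective (add_right_injective j) _
    _ ≤ _ := hSle

lemma isCarleson_weightedCoeff_div_rpow (hq : 0 < q) (h₀ : seqNormInf α q lam ≠ 0)
    (h : seqNormInf α q lam ≠ ⊤) :
    IsCarleson volume (dyadicFiltration n) 1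
      fun v x => (weightedCoeff α lam v x / seqNormInf α q lam) ^ q := by
  have hne : seqNormInf α q lam ^ q ≠ 0 := (ENNReal.rpow_pos (pos_of_ne_zero h₀) h).ne'
  convert (isCarleson_weightedCoeff_rpow hq α lam).const_mul (ENNReal.inv_ne_top.2 hne) using 3
  · exact (ENNReal.inv_mul_cancel hne (by finiteness)).symm
  · rw [ENNReal.div_rpow_of_nonneg _ _ hq.le, ENNReal.div_eq_inv_mul]

lemma ae_weightedCoeff_eq_zero_of_seqNormInf_eq_zero (hq : 0 < q) (hα : Measurable α)
    (h : seqNormInf α q lam = 0) : ∀ᵐ x, ∀ v, weightedCoeff α lam v x = 0 := by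
  refine ae_all_iff.2 fun v => ?_
  have hcar := isCarleson_weightedCoeff_rpow hq α lam v Set.univ MeasurableSet.univ
  simp only [h, ENNReal.zero_rpow_of_pos hq, zero_mul, nonpos_iff_eq_zero, ENNReal.tsum_eq_zero,
    Measure.restrict_univ] at hcar
  filter_upwards [(lintegral_eq_zero_iff
    ((measurable_weightedCoeff hα lam v).pow_const q)).1 (hcar 0)] with x hx
  exact (ENNReal.rpow_eq_zero_iff_of_pos hq).1 hx

lemma ae_weightedCoeff_eq_zero_of_seqNorm_eq_zero {p : En n → ℝ} {δ : ℝ} (hq : 0 < q)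
    (hδ : 0 < δ) (hp : ∀ x, δ ≤ p x) (hpm : Measurable p) (hα : Measurable α)
    (h : seqNorm α p (fun _ => q) lam = 0) : ∀ᵐ x, ∀ v, weightedCoeff α lam v x = 0 := by
  rw [seqNorm_const_eq_luxNorm] at h
  have hm (v : ℕ) := (measurable_weightedCoeff hα lam v).pow_const q
  filter_upwards [ae_eq_zero_of_luxNorm_eq_zero hδ hp hpm
    ((Measurable.tsum hm).pow_const (1 / q)) h] with x hx v
  have hsum := (ENNReal.rpow_eq_zero_iff_of_pos (one_div_pos.2 hq)).1 hx
  exact (ENNReal.rpow_eq_zero_iff_of_pos hq).1 (ENNReal.tsum_eq_zero.1 hsum v)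

lemma seqNorm_eq_zero_of_ae_weightedCoeff_eq_zero {p : En n → ℝ} (hq : 0 < q) (hp : ∀ x, 0 < p x)
    (h : ∀ᵐ x, ∀ v, weightedCoeff α lam v x = 0) : seqNorm α p (fun _ => q) lam = 0 := by
  rw [seqNorm_const_eq_luxNorm]
  refine luxNorm_eq_zero_of_ae_eq_zero hp ?_
  filter_upwards [h] with x hx
  simp [hx, hq]

variable {θ : ℝ} {α₀ α₁ : En n → ℝ} {lam0 lam1 : ℕ → (Fin n → ℤ) → ℂ}

lemma weightedCoeff_le_rpow_mul_rpow (hθ₀ : 0 ≤ θ) (hθ₁ : θ ≤ 1)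
    (hα : ∀ x, α x = (1 - θ) * α₀ x + θ * α₁ x)
    (hlam : ∀ j m, ‖lam j m‖ ≤ ‖lam0 j m‖ ^ (1 - θ) * ‖lam1 j m‖ ^ θ) (v : ℕ) (x : En n) :
    weightedCoeff α lam v x ≤
      weightedCoeff α₀ lam0 v x ^ (1 - θ) * weightedCoeff α₁ lam1 v x ^ θ := by
  have h1 : 0 ≤ 1 - θ := sub_nonneg.2 hθ₁
  have hweight : (2 : ℝ) ^ (v * (α x + n / 2)) =
      (2 ^ (v * (α₀ x + n / 2))) ^ (1 - θ) * (2 ^ (v * (α₁ x + n / 2))) ^ θ := by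
    rw [← Real.rpow_mul zero_le_two, ← Real.rpow_mul zero_le_two, ← Real.rpow_add two_pos, hα]
    ring_nf
  simp only [weightedCoeff]
  rw [ENNReal.ofReal_rpow_of_nonneg (by positivity) h1,
    ENNReal.ofReal_rpow_of_nonneg (by positivity) hθ₀, ← ENNReal.ofReal_mul (by positivity),
    Real.mul_rpow (by positivity) (norm_nonneg _), Real.mul_rpow (by positivity) (norm_nonneg _),
    mul_mul_mul_comm, ← hweight]
  gcongr
  exact hlam _ _

lemma seqNorm_eq_zero_of_seqNorm_eq_zero_or_seqNormInf_eq_zero {p p₀ : En n → ℝ} {q₀ q₁ δ : ℝ}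
    (hθ₀ : 0 < θ) (hθ₁ : θ < 1) (hq : 0 < q) (hq₀ : 0 < q₀) (hq₁ : 0 < q₁)
    (hp : ∀ x, 0 < p x) (hδ : 0 < δ) (hp₀ : ∀ x, δ ≤ p₀ x) (hp₀m : Measurable p₀)
    (hα₀ : Measurable α₀) (hα₁ : Measurable α₁)
    (hα : ∀ x, α x = (1 - θ) * α₀ x + θ * α₁ x)
    (hlam : ∀ j m, ‖lam j m‖ ≤ ‖lam0 j m‖ ^ (1 - θ) * ‖lam1 j m‖ ^ θ)
    (h : seqNorm α₀ p₀ (fun _ => q₀) lam0 = 0 ∨ seqNormInf α₁ q₁ lam1 = 0) :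
    seqNorm α p (fun _ => q) lam = 0 := by
  have h1 : 0 < 1 - θ := sub_pos.2 hθ₁
  have hle := weightedCoeff_le_rpow_mul_rpow hθ₀.le hθ₁.le hα hlam
  refine seqNorm_eq_zero_of_ae_weightedCoeff_eq_zero hq hp ?_
  rcases h with h | h
  · filter_upwards [ae_weightedCoeff_eq_zero_of_seqNorm_eq_zero hq₀ hδ hp₀ hp₀m hα₀ h] with x hx v
    simpa [hx, h1] using hle v x
  · filter_upwards [ae_weightedCoeff_eq_zero_of_seqNormInf_eq_zero hq₁ hα₁ h] with x hx v
    simpa [hx, hθ₀] using hle v x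

lemma weightedCoeff_div_rpow_le {q₀ q₁ : ℝ} (hθ₀ : 0 ≤ θ) (hθ₁ : θ ≤ 1) (hq : 0 ≤ q)
    (hq₀ : q₀ ≠ 0) (hq₁ : q₁ ≠ 0) (hα : ∀ x, α x = (1 - θ) * α₀ x + θ * α₁ x)
    (hlam : ∀ j m, ‖lam j m‖ ≤ ‖lam0 j m‖ ^ (1 - θ) * ‖lam1 j m‖ ^ θ) {c₀ c₁ : ℝ≥0∞}
    (hc₀ : c₀ ≠ 0) (hc₁ : c₁ ≠ 0) (v : ℕ) (x : En n) :
    (weightedCoeff α lam v x / (c₀ ^ (1 - θ) * c₁ ^ θ)) ^ q ≤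
      ((weightedCoeff α₀ lam0 v x / c₀) ^ q₀) ^ ((1 - θ) * q / q₀) *
        ((weightedCoeff α₁ lam1 v x / c₁) ^ q₁) ^ (θ * q / q₁) := by
  rw [← ENNReal.rpow_mul, ← ENNReal.rpow_mul, mul_div_cancel₀ _ hq₀, mul_div_cancel₀ _ hq₁,
    ENNReal.rpow_mul, ENNReal.rpow_mul, ← ENNReal.mul_rpow_of_nonneg _ _ hq]
  gcongr
  exact div_rpow_mul_rpow_le hθ₀ hθ₁ hc₀ hc₁
    (weightedCoeff_le_rpow_mul_rpow hθ₀ hθ₁ hα hlam v x)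

variable {p p₀ : En n → ℝ} {q₀ q₁ δ c c' c'' : ℝ}

lemma GlobLogHolder.exists_lintegral_weightedCoeff_le (hp₀ : GlobLogHolder c p₀) (hδ : 0 < δ)
    (hδp₀ : ∀ x, δ ≤ p₀ x) (hα₀ : LocLogHolder c' α₀) (hα₁ : LocLogHolder c'' α₁)
    (hθ₀ : 0 < θ) (hθ₁ : θ < 1) (hq₀ : 0 < q₀) (hq₁ : 0 < q₁) (hq : 0 < q)
    (hqθ : (1 - θ) * q / q₀ + θ * q / q₁ = 1) :
    ∃ C : ℝ≥0∞, C ≠ ⊤ ∧ ∀ (lam0 lam1 : ℕ → (Fin n → ℤ) → ℂ) (c₀ : ℝ≥0∞),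
      seqNorm α₀ p₀ (fun _ => q₀) lam0 < c₀ → seqNormInf α₁ q₁ lam1 ≠ 0 →
      seqNormInf α₁ q₁ lam1 ≠ ⊤ →
      ∫⁻ x, (∑' v, ((weightedCoeff α₀ lam0 v x / c₀) ^ q₀) ^ ((1 - θ) * q / q₀) *
        ((weightedCoeff α₁ lam1 v x / seqNormInf α₁ q₁ lam1) ^ q₁) ^ (θ * q / q₁)) ^
          (p₀ x / (1 - θ) / q) ≤ C := by
  have h1 : 0 < 1 - θ := sub_pos.2 hθ₁
  have ht₀ : 0 < (1 - θ) * q / q₀ := by positivity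
  have ht₁ : 0 < θ * q / q₁ := by positivity
  obtain ⟨M₀, hM₀⟩ := hα₀.exists_almostConstOnCubes_weightedCoeff
  obtain ⟨M₁, hM₁⟩ := hα₁.exists_almostConstOnCubes_weightedCoeff
  obtain ⟨C, hC, hle⟩ := (hp₀.div_const hq₀).exists_lintegral_tsum_rpow_mul_rpow_le
    (div_pos hδ hq₀) (fun x => div_le_div_of_nonneg_right (hδp₀ x) hq₀.le) ht₀
    (by linarith) (max (M₀ ^ q₀) (M₁ ^ q₁))
  refine ⟨C, hC, fun lam0 lam1 c₀ h₀ hN₀ hN => ?_⟩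
  have hp₀_nonneg (x : En n) : 0 ≤ p₀ x := hδ.le.trans (hδp₀ x)
  rw [seqNorm_const_eq_luxNorm] at h₀
  have hint : ∫⁻ x, (∑' v, (weightedCoeff α₀ lam0 v x / c₀) ^ q₀) ^ (p₀ x / q₀) ≤ 1 := by
    simpa only [tsum_rpow_rpow_div_rpow hq₀] using
      lintegral_div_rpow_le_one_of_luxNorm_lt hp₀_nonneg h₀
  have hexp (x : En n) : p₀ x / (1 - θ) / q = p₀ x / q₀ / ((1 - θ) * q / q₀) := by field_simp
  simp only [hexp, eq_sub_of_add_eq' hqθ]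
  exact hle _ _
    (fun v => ((measurable_weightedCoeff hα₀.continuous.measurable lam0 v).div_const _).pow_const _)
    (fun v => ((hM₀ lam0 v).div_rpow hq₀.le c₀).mono (le_max_left _ _))
    (fun v => ((hM₁ lam1 v).div_rpow hq₁.le _).mono (le_max_right _ _)) hint
    (isCarleson_weightedCoeff_div_rpow hq₁ hN₀ hN)

lemma GlobLogHolder.exists_seqNorm_le_mul_of_lt (hp₀ : GlobLogHolder c p₀) (hδ : 0 < δ)
    (hδp₀ : ∀ x, δ ≤ p₀ x) (hα₀ : LocLogHolder c' α₀) (hα₁ : LocLogHolder c'' α₁)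
    (hθ₀ : 0 < θ) (hθ₁ : θ < 1) (hq₀ : 0 < q₀) (hq₁ : 0 < q₁) (hq : 0 < q)
    (hqθ : (1 - θ) * q / q₀ + θ * q / q₁ = 1) (hp : ∀ x, p x = p₀ x / (1 - θ))
    (hα : ∀ x, α x = (1 - θ) * α₀ x + θ * α₁ x) :
    ∃ C : ℝ≥0∞, C ≠ ⊤ ∧ ∀ lam lam0 lam1 : ℕ → (Fin n → ℤ) → ℂ,
      (∀ j m, ‖lam j m‖ ≤ ‖lam0 j m‖ ^ (1 - θ) * ‖lam1 j m‖ ^ θ) → ∀ c₀ : ℝ≥0∞,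
      seqNorm α₀ p₀ (fun _ => q₀) lam0 < c₀ → seqNormInf α₁ q₁ lam1 ≠ 0 →
      seqNormInf α₁ q₁ lam1 ≠ ⊤ →
      seqNorm α p (fun _ => q) lam ≤ C * (c₀ ^ (1 - θ) * seqNormInf α₁ q₁ lam1 ^ θ) := by
  obtain ⟨C, hC, hle⟩ :=
    hp₀.exists_lintegral_weightedCoeff_le hδ hδp₀ hα₀ hα₁ hθ₀ hθ₁ hq₀ hq₁ hq hqθ
  refine ⟨max 1 C ^ δ⁻¹, by finiteness, fun lam lam0 lam1 hlam c₀ h₀ hN₀ hN => ?_⟩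
  have h1 : 0 < 1 - θ := sub_pos.2 hθ₁
  have hδp (x : En n) : δ ≤ p x := by
    rw [hp, le_div_iff₀ h1]
    nlinarith [hδp₀ x]
  have hc₀ : c₀ ≠ 0 := (bot_le.trans_lt h₀).ne'
  have hD : c₀ ^ (1 - θ) * seqNormInf α₁ q₁ lam1 ^ θ ≠ 0 :=
    mul_ne_zero (ENNReal.rpow_pos_of_nonneg (pos_of_ne_zero hc₀) h1.le).ne'
      (ENNReal.rpow_pos_of_nonneg (pos_of_ne_zero hN₀) hθ₀.le).ne'
  rw [seqNorm_const_eq_luxNorm]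
  refine luxNorm_le_of_lintegral_div_rpow_le hδ hδp hD ?_
  refine (lintegral_mono fun x => ?_).trans (hle lam0 lam1 c₀ h₀ hN₀ hN)
  have hpq : 0 ≤ p₀ x / (1 - θ) / q := by rw [← hp]; exact div_nonneg (hδ.le.trans (hδp x)) hq.le
  rw [tsum_rpow_rpow_div_rpow hq, hp]
  gcongr with v
  exact weightedCoeff_div_rpow_le hθ₀.le hθ₁.le hq.le hq₀.ne' hq₁.ne' hα hlam hc₀ hN₀ v x

lemma GlobLogHolder.exists_seqNorm_le_mul (hp₀ : GlobLogHolder c p₀) (hδ : 0 < δ)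
    (hδp₀ : ∀ x, δ ≤ p₀ x) (hα₀ : LocLogHolder c' α₀) (hα₁ : LocLogHolder c'' α₁)
    (hθ₀ : 0 < θ) (hθ₁ : θ < 1) (hq₀ : 0 < q₀) (hq₁ : 0 < q₁) (hq : 0 < q)
    (hqθ : (1 - θ) * q / q₀ + θ * q / q₁ = 1) (hp : ∀ x, p x = p₀ x / (1 - θ))
    (hα : ∀ x, α x = (1 - θ) * α₀ x + θ * α₁ x) :
    ∃ C : ℝ≥0∞, 0 < C ∧ C ≠ ⊤ ∧ ∀ lam lam0 lam1 : ℕ → (Fin n → ℤ) → ℂ,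
      (∀ j m, ‖lam j m‖ ≤ ‖lam0 j m‖ ^ (1 - θ) * ‖lam1 j m‖ ^ θ) →
      seqNorm α p (fun _ => q) lam ≤
        C * (seqNorm α₀ p₀ (fun _ => q₀) lam0 ^ (1 - θ) * seqNormInf α₁ q₁ lam1 ^ θ) := by
  obtain ⟨C, hC, hle⟩ :=
    hp₀.exists_seqNorm_le_mul_of_lt hδ hδp₀ hα₀ hα₁ hθ₀ hθ₁ hq₀ hq₁ hq hqθ hp hα
  have h1 : 0 < 1 - θ := sub_pos.2 hθ₁
  have hp_pos (x : En n) : 0 < p x := by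
    rw [hp]
    exact div_pos (hδ.trans_le (hδp₀ x)) h1
  have hK : 0 < max 1 (C * 2 ^ (1 - θ)) := zero_lt_one.trans_le (le_max_left _ _)
  refine ⟨max 1 (C * 2 ^ (1 - θ)), hK, by finiteness, fun lam lam0 lam1 hlam => ?_⟩
  set N₀ := seqNorm α₀ p₀ (fun _ => q₀) lam0
  set N₁ := seqNormInf α₁ q₁ lam1
  by_cases hzero : N₀ = 0 ∨ N₁ = 0
  · rw [seqNorm_eq_zero_of_seqNorm_eq_zero_or_seqNormInf_eq_zero hθ₀ hθ₁ hq hq₀ hq₁ hp_pos hδ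
      hδp₀ hp₀.1.continuous.measurable hα₀.continuous.measurable hα₁.continuous.measurable hα hlam
      hzero]
    exact bot_le
  obtain ⟨hN₀, hN₁⟩ := not_or.1 hzero
  have hN₀' : N₀ ^ (1 - θ) ≠ 0 := (ENNReal.rpow_pos_of_nonneg (pos_of_ne_zero hN₀) h1.le).ne'
  have hN₁' : N₁ ^ θ ≠ 0 := (ENNReal.rpow_pos_of_nonneg (pos_of_ne_zero hN₁) hθ₀.le).ne'
  rcases eq_or_ne N₀ ⊤ with htop | hN₀_top
  · simp [htop, ENNReal.top_rpow_of_pos h1, ENNReal.top_mul hN₁', ENNReal.mul_top hK.ne']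
  rcases eq_or_ne N₁ ⊤ with htop | hN₁_top
  · simp [htop, ENNReal.top_rpow_of_pos hθ₀, ENNReal.mul_top hN₀', ENNReal.mul_top hK.ne']
  have hlt : N₀ < 2 * N₀ := by
    rw [two_mul]
    exact ENNReal.lt_add_right hN₀_top hN₀
  calc seqNorm α p (fun _ => q) lam ≤ C * ((2 * N₀) ^ (1 - θ) * N₁ ^ θ) :=
        hle lam lam0 lam1 hlam _ hlt hN₁ hN₁_top
    _ = C * 2 ^ (1 - θ) * (N₀ ^ (1 - θ) * N₁ ^ θ) := by
        rw [ENNReal.mul_rpow_of_nonneg _ _ h1.le]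
        ring
    _ ≤ max 1 (C * 2 ^ (1 - θ)) * (N₀ ^ (1 - θ) * N₁ ^ θ) := by
        gcongr
        exact le_max_right _ _

end SequenceSpaces

theorem stmt12_general {n : ℕ} {θ : ℝ} (hθ : θ ∈ Ioo (0 : ℝ) 1) {q₀ q₁ q : ℝ}
    (hq₀ : 0 < q₀) (hq₁ : 0 < q₁) {p₀ α₀ α₁ p α : En n → ℝ}
    (hp₀ : ∃ c, GlobLogHolder c p₀) (hp₀b : ∃ δ > 0, ∀ x, δ ≤ p₀ x)
    (hα₀ : ∃ c, LocLogHolder c α₀) (hα₁ : ∃ c, LocLogHolder c α₁)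
    (hp : ∀ x, 1 / p x = (1 - θ) / p₀ x)
    (hq : 1 / q = (1 - θ) / q₀ + θ / q₁)
    (hα : ∀ x, α x = (1 - θ) * α₀ x + θ * α₁ x) :
    ∃ c : ℝ, 0 < c ∧ ∀ lam lam0 lam1 : ℕ → (Fin n → ℤ) → ℂ,
      (∀ j m, ‖lam j m‖ ≤ ‖lam0 j m‖ ^ (1 - θ) * ‖lam1 j m‖ ^ θ) →
      seqNorm α p (fun _ => q) lam ≤
        ENNReal.ofReal c *
          (seqNorm α₀ p₀ (fun _ => q₀) lam0 ^ (1 - θ) * seqNormInf α₁ q₁ lam1 ^ θ) := by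
  obtain ⟨hθ₀, hθ₁⟩ := hθ
  obtain ⟨c, hp₀⟩ := hp₀
  obtain ⟨δ, hδ, hδp₀⟩ := hp₀b
  obtain ⟨c', hα₀⟩ := hα₀
  obtain ⟨c'', hα₁⟩ := hα₁
  have := sub_pos.2 hθ₁
  have hq_pos : 0 < q := one_div_pos.1 (hq ▸ by positivity)
  have hqθ : (1 - θ) * q / q₀ + θ * q / q₁ = 1 := by
    rw [mul_div_right_comm, mul_div_right_comm θ, ← add_mul, ← hq, one_div_mul_cancel hq_pos.ne']
  have hp' (x : En n) : p x = p₀ x / (1 - θ) := by rw [← one_div_one_div (p x), hp, one_div_div]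
  obtain ⟨C, hC₀, hC, hle⟩ :=
    hp₀.exists_seqNorm_le_mul hδ hδp₀ hα₀ hα₁ hθ₀ hθ₁ hq₀ hq₁ hq_pos hqθ hp' hα
  exact ⟨C.toReal, ENNReal.toReal_pos hC₀.ne' hC, by rwa [ENNReal.ofReal_toReal hC]⟩

/-- Step 1 of Theorem `calderon-prod2`: Hölder-type inequality
`‖λ‖_{f^{α}_{p,q}} ≤ c ‖λ⁰‖^{1−θ}_{f^{α₀}_{p₀,q₀}} ‖λ¹‖^{θ}_{f^{α₁}_{∞,q₁}}`. -/
theorem stmt12 {n : ℕ} (θ : ℝ) (hθ : θ ∈ Set.Ioo (0 : ℝ) 1)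
    (q₀ q₁ q : ℝ) (hq₀ : 1 ≤ q₀) (hq₁ : 1 ≤ q₁)
    (p₀ α₀ α₁ p α : En n → ℝ)
    (hp₀ : ∃ c, GlobLogHolder c p₀)
    (hp₀b : ∃ b : ℝ, ∀ x, 1 ≤ p₀ x ∧ p₀ x ≤ b)
    (hα₀ : ∃ c, LocLogHolder c α₀) (hα₁ : ∃ c, LocLogHolder c α₁)
    (hp : ∀ x, 1 / p x = (1 - θ) / p₀ x)
    (hq : 1 / q = (1 - θ) / q₀ + θ / q₁)
    (hα : ∀ x, α x = (1 - θ) * α₀ x + θ * α₁ x) :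
    ∃ c : ℝ, 0 < c ∧ ∀ lam lam0 lam1 : ℕ → (Fin n → ℤ) → ℂ,
      (∀ (j : ℕ) (m : Fin n → ℤ), ‖lam j m‖ ≤ ‖lam0 j m‖ ^ (1 - θ) * ‖lam1 j m‖ ^ θ) →
      seqNorm α p (fun _ => q) lam ≤
        ENNReal.ofReal c *
          (seqNorm α₀ p₀ (fun _ => q₀) lam0 ^ (1 - θ) * seqNormInf α₁ q₁ lam1 ^ θ) := by
  obtain ⟨_, hb⟩ := hp₀b
  exact stmt12_general hθ (zero_lt_one.trans_le hq₀) (zero_lt_one.trans_le hq₁) hp₀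
    ⟨1, one_pos, fun x => (hb x).1⟩ hα₀ hα₁ hp hq hα
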